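/- For every integer N ≥ 2, every real p > 1, all positive reals f, F with f^p ≤ F, and every κ with c(N,p) ≤ κ ≤ 1, one has D_p(F,f,κ) = κ·f^p + ((N^p − 1)/(N^p − N))·(F − f^p), where D_p(F,f,κ) := inf { sup_{E measurable, μ(E)=κ} ∫_E (M_N φ)^p dμ : φ ≥ 0 measurable on [0,1), ∫ φ dμ = f, ∫ φ^p dμ = F }. -/

import Mathlib

open MeasureTheory Set Filter

/-- The `N`-adic interval `[k/N^m, (k+1)/N^m)` at level `m`. -/
def adicItv (N m k : ℕ) : Set ℝ :=
  Set.Ico ((k : ℝ) / (N : ℝ) ^ m) (((k : ℝ) + 1) / (N : ℝ) ^ m)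

/-- The average `(1/μ(I)) ∫_I |φ| dμ` of `φ` over the `N`-adic interval at level `m`, index `k`
(its measure is `N^{-m}`). -/
noncomputable def adicAvg (N : ℕ) (φ : ℝ → ℝ) (m k : ℕ) : ℝ :=
  (N : ℝ) ^ m * ∫ y in adicItv N m k, |φ y|

/-- The `N`-adic maximal operator on `[0,1)`:
`M_N φ(x) = sup { (1/μ(I)) ∫_I |φ| dμ : x ∈ I, I an N-adic interval }`. -/
noncomputable def adicMax (N : ℕ) (φ : ℝ → ℝ) (x : ℝ) : ℝ :=
  sSup {r : ℝ | ∃ m k : ℕ, k < N ^ m ∧ x ∈ adicItv N m k ∧ r = adicAvg N φ m k}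

/-- `sup { ∫_E (M_N φ)^p dμ : E ⊆ [0,1) measurable, μ(E) = κ }`. -/
noncomputable def supMeas (N : ℕ) (p κ : ℝ) (φ : ℝ → ℝ) : ℝ :=
  sSup {z : ℝ | ∃ E : Set ℝ, MeasurableSet E ∧ E ⊆ Set.Ico (0:ℝ) 1 ∧
    volume E = ENNReal.ofReal κ ∧ z = ∫ x in E, adicMax N φ x ^ p}

/-- The Bellman function `D_p(F,f,κ)`: the infimum of
`sup { ∫_E (M_N φ)^p dμ : μ(E) = κ }` over all nonnegative measurable `φ` on `[0,1)`
with `∫ φ dμ = f` and `∫ φ^p dμ = F`. -/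
noncomputable def Dp (N : ℕ) (p F f κ : ℝ) : ℝ :=
  sInf {y : ℝ | ∃ φ : ℝ → ℝ, Measurable φ ∧ (∀ x ∈ Set.Ico (0:ℝ) 1, 0 ≤ φ x) ∧
    (∫ x in Set.Ico (0:ℝ) 1, φ x) = f ∧ (∫ x in Set.Ico (0:ℝ) 1, φ x ^ p) = F ∧
    y = supMeas N p κ φ}

noncomputable section

def lvA (N : ℕ) (φ : ℝ → ℝ) (m : ℕ) (x : ℝ) : ℝ := adicAvg N φ m ⌊(N : ℝ) ^ m * x⌋₊

def sb (N : ℕ) (φ : ℝ → ℝ) (i : ℕ) (x : ℝ) : ℝ := φ (((i : ℝ) + x) / N)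

lemma mem_adicItv_iff {N : ℕ} (hN : 2 ≤ N) {m k : ℕ} {x : ℝ} (hx : 0 ≤ x) :
    x ∈ adicItv N m k ↔ ⌊(N : ℝ) ^ m * x⌋₊ = k := by
  have hN0 : (0:ℝ) < (N:ℝ) ^ m := by positivity
  rw [Nat.floor_eq_iff (by positivity), adicItv, mem_Ico, div_le_iff₀ hN0, lt_div_iff₀ hN0,
    mul_comm x]

lemma floor_lt_pow {N : ℕ} (hN : 2 ≤ N) (m : ℕ) {x : ℝ} (hx : x ∈ Ico (0:ℝ) 1) :
    ⌊(N : ℝ) ^ m * x⌋₊ < N ^ m := by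
  have hN0 : (0:ℝ) < (N:ℝ) ^ m := by positivity
  rw [Nat.floor_lt (mul_nonneg hN0.le hx.1)]
  push_cast
  nlinarith [hx.2]

lemma adicItv_subset {N : ℕ} (hN : 2 ≤ N) {m k : ℕ} (hk : k < N ^ m) :
    adicItv N m k ⊆ Ico (0:ℝ) 1 := by
  have hN0 : (0:ℝ) < (N:ℝ) ^ m := by positivity
  have : ((k:ℝ) + 1) ≤ (N:ℝ) ^ m := by exact_mod_cast hk
  apply Ico_subset_Ico
  · positivity
  · rw [div_le_one hN0]; exact this

lemma adicMax_eq {N : ℕ} (hN : 2 ≤ N) (φ : ℝ → ℝ) {x : ℝ} (hx : x ∈ Ico (0:ℝ) 1) :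
    adicMax N φ x = ⨆ m, lvA N φ m x := by
  unfold adicMax iSup
  congr 1
  ext r
  constructor
  · rintro ⟨m, k, hk, hxk, rfl⟩
    rw [mem_adicItv_iff hN hx.1] at hxk
    exact ⟨m, by simp only [lvA, hxk]⟩
  · rintro ⟨m, rfl⟩
    exact ⟨m, _, floor_lt_pow hN m hx, (mem_adicItv_iff hN hx.1).2 rfl, rfl⟩

lemma lvA_zero {N : ℕ} (φ : ℝ → ℝ) {x : ℝ} (hx : x ∈ Ico (0:ℝ) 1) :
    lvA N φ 0 x = ∫ y in Ico (0:ℝ) 1, |φ y| := by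
  have : ⌊x⌋₊ = 0 := by rw [Nat.floor_eq_zero]; exact hx.2
  simp [lvA, adicAvg, adicItv, this]

lemma lvA_congr {N : ℕ} (hN : 2 ≤ N) {φ ψ : ℝ → ℝ} (h : ∀ x ∈ Ico (0:ℝ) 1, φ x = ψ x) (m : ℕ)
    {x : ℝ} (hx : x ∈ Ico (0:ℝ) 1) : lvA N φ m x = lvA N ψ m x := by
  unfold lvA adicAvg
  congr 1
  apply setIntegral_congr_fun (by unfold adicItv; exact measurableSet_Ico)
  intro y hy
  simp only [h y (adicItv_subset hN (floor_lt_pow hN m hx) hy)]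

lemma adicAvg_sb {N : ℕ} (hN : 2 ≤ N) (φ : ℝ → ℝ) (m i k : ℕ) :
    adicAvg N φ (m+1) (N ^ m * i + k) = adicAvg N (sb N φ i) m k := by
  have hN0 : (0:ℝ) < (N:ℝ) := by positivity
  have hNm : (0:ℝ) < (N:ℝ) ^ m := by positivity
  unfold adicAvg adicItv
  rw [integral_Ico_eq_integral_Ioc, integral_Ico_eq_integral_Ioc,
    ← intervalIntegral.integral_of_le (by gcongr; simp),
    ← intervalIntegral.integral_of_le (by gcongr; simp)]
  have := intervalIntegral.integral_comp_add_div (fun y => |φ y|) (a := (k:ℝ) / (N:ℝ)^m)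
    (b := ((k:ℝ)+1) / (N:ℝ)^m) hN0.ne' ((i:ℝ) / N)
  have h2 : ∀ x : ℝ, |sb N φ i x| = |φ ((i:ℝ)/N + x / N)| := by
    intro x; simp only [sb, add_div]
  simp_rw [h2]
  rw [this, smul_eq_mul, ← mul_assoc, ← pow_succ]
  congr 2
  · push_cast; field_simp; ring
  · push_cast; field_simp; ring

lemma sb_mem {N : ℕ} (hN : 2 ≤ N) {i : ℕ} (hi : i < N) {x : ℝ} (hx : x ∈ Ico (0:ℝ) 1) :
    ((i:ℝ) + x) / N ∈ Ico (0:ℝ) 1 := by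
  have hN0 : (0:ℝ) < (N:ℝ) := by positivity
  have : (i:ℝ) + 1 ≤ N := by exact_mod_cast hi
  refine ⟨div_nonneg (add_nonneg (by positivity) hx.1) hN0.le, ?_⟩
  rw [div_lt_one hN0]; linarith [hx.2]

lemma lvA_succ {N : ℕ} (hN : 2 ≤ N) (φ : ℝ → ℝ) (m : ℕ) {i : ℕ}
    {x : ℝ} (hx : x ∈ Ico (0:ℝ) 1) :
    lvA N φ (m+1) (((i:ℝ) + x) / N) = lvA N (sb N φ i) m x := by
  unfold lvA
  rw [← adicAvg_sb hN]
  congr 1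
  have hN0 : (0:ℝ) < (N:ℝ) := by positivity
  have : (N:ℝ) ^ (m+1) * (((i:ℝ) + x) / N) = (N:ℝ)^m * x + ((N ^ m * i : ℕ) : ℝ) := by
    push_cast; field_simp; ring
  rw [this, Nat.floor_add_natCast (mul_nonneg (by positivity) hx.1), add_comm]

lemma sb_integrable {N : ℕ} (hN : 2 ≤ N) {g : ℝ → ℝ} (hg : IntegrableOn g (Ico (0:ℝ) 1))
    {i : ℕ} (hi : i < N) : IntegrableOn (sb N g i) (Ico (0:ℝ) 1) := by
  have hN0 : (0:ℝ) < (N:ℝ) := by positivity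
  have h2 : ((i:ℝ)+1) ≤ N := by exact_mod_cast hi
  have h1 : IntervalIntegrable g volume ((i:ℝ)/N) (((i:ℝ)+1)/N) := by
    rw [intervalIntegrable_iff_integrableOn_Ico_of_le (by gcongr; simp)]
    refine hg.mono_set (Ico_subset_Ico (by positivity) ?_)
    rwa [div_le_one hN0]
  have h3 := (h1.comp_add_left ((i:ℝ)/N)).comp_mul_left (c := (N:ℝ)⁻¹)
  rw [← intervalIntegrable_iff_integrableOn_Ico_of_le zero_le_one]
  convert h3 using 1
  · ext x; simp only [sb]; congr 1; field_simp
  · simp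
  · field_simp; ring

lemma int_split {N : ℕ} (hN : 2 ≤ N) {g : ℝ → ℝ} (hg : IntegrableOn g (Ico (0:ℝ) 1)) :
    ∫ x in Ico (0:ℝ) 1, g x
      = (1 / (N:ℝ)) * ∑ i ∈ Finset.range N, ∫ x in Ico (0:ℝ) 1, sb N g i x := by
  have hN0 : (0:ℝ) < (N:ℝ) := by positivity
  have e : ∀ i : ℕ, ∫ x in Ico (0:ℝ) 1, sb N g i x
      = N * ∫ x in ((i:ℝ)/N)..(((i+1:ℕ):ℝ)/N), g x := by
    intro i
    rw [integral_Ico_eq_integral_Ioc, ← intervalIntegral.integral_of_le zero_le_one]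
    have := intervalIntegral.integral_comp_add_div g (a := 0) (b := 1) hN0.ne' ((i:ℝ) / N)
    simp only [sb, add_div]
    rw [this, smul_eq_mul]
    push_cast
    simp [add_div]
  simp_rw [e]
  rw [← Finset.mul_sum, intervalIntegral.sum_integral_adjacent_intervals
    (a := fun i : ℕ => (i:ℝ)/N)]
  · rw [integral_Ico_eq_integral_Ioc, ← intervalIntegral.integral_of_le zero_le_one]
    simp [hN0.ne']
  · intro k hk
    have h2 : ((k:ℝ)+1) ≤ N := by exact_mod_cast hk
    rw [intervalIntegrable_iff_integrableOn_Ico_of_le (by gcongr; simp)]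
    refine hg.mono_set (Ico_subset_Ico (by positivity) ?_)
    push_cast
    rwa [div_le_one hN0]

end
noncomputable section

def VV (N : ℕ) (l : ℝ) (φ : ℝ → ℝ) : ℕ → ℝ → ℝ
  | 0, x => max l (lvA N φ 0 x)
  | (m+1), x => max (VV N l φ m x) (lvA N φ (m+1) x)

lemma lvA_nonneg (N : ℕ) (φ : ℝ → ℝ) (m : ℕ) (x : ℝ) : 0 ≤ lvA N φ m x := by
  unfold lvA adicAvg
  exact mul_nonneg (by positivity) (integral_nonneg (fun _ => abs_nonneg _))

lemma lvA_le {N : ℕ} (hN : 2 ≤ N) {φ : ℝ → ℝ} (hφ : IntegrableOn φ (Ico (0:ℝ) 1)) (m : ℕ) {x : ℝ}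
    (hx : x ∈ Ico (0:ℝ) 1) : lvA N φ m x ≤ (N:ℝ)^m * ∫ y in Ico (0:ℝ) 1, |φ y| := by
  unfold lvA adicAvg
  gcongr
  · exact Eventually.of_forall fun _ => abs_nonneg _
  · exact hφ.abs
  · exact adicItv_subset hN (floor_lt_pow hN m hx)

lemma lvA_meas (N : ℕ) (φ : ℝ → ℝ) (m : ℕ) : Measurable (lvA N φ m) := by
  unfold lvA
  exact (Measurable.of_discrete (f := fun k : ℕ => adicAvg N φ m k)).comp
    (Nat.measurable_floor.comp (measurable_const_mul _))

lemma VV_meas (N : ℕ) (l : ℝ) (φ : ℝ → ℝ) (m : ℕ) : Measurable (VV N l φ m) := by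
  induction m with
  | zero => exact measurable_const.max (lvA_meas N φ 0)
  | succ m ih => exact ih.max (lvA_meas N φ (m+1))

lemma le_VV (N : ℕ) (l : ℝ) (φ : ℝ → ℝ) (m : ℕ) (x : ℝ) : l ≤ VV N l φ m x := by
  induction m with
  | zero => exact le_max_left _ _
  | succ m ih => exact ih.trans (le_max_left _ _)

lemma lvA_le_VV (N : ℕ) (l : ℝ) (φ : ℝ → ℝ) (m : ℕ) (x : ℝ) : lvA N φ m x ≤ VV N l φ m x := by
  cases m with
  | zero => exact le_max_right _ _
  | succ m => exact le_max_right _ _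

lemma VV_mono (N : ℕ) (l : ℝ) (φ : ℝ → ℝ) (x : ℝ) : Monotone (fun m => VV N l φ m x) :=
  monotone_nat_of_le_succ fun _ => le_max_left _ _

lemma VV_le_of {N : ℕ} {l : ℝ} {φ : ℝ → ℝ} {m : ℕ} {x B : ℝ} (hl : l ≤ B)
    (h : ∀ j, j ≤ m → lvA N φ j x ≤ B) : VV N l φ m x ≤ B := by
  induction m with
  | zero => exact max_le hl (h 0 le_rfl)
  | succ m ih => exact max_le (ih fun j hj => h j (by omega)) (h _ le_rfl)

lemma VV_le {N : ℕ} (hN : 2 ≤ N) {φ : ℝ → ℝ} (hφ : IntegrableOn φ (Ico (0:ℝ) 1)) (l : ℝ) (m : ℕ)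
    {x : ℝ} (hx : x ∈ Ico (0:ℝ) 1) :
    VV N l φ m x ≤ max l ((N:ℝ)^m * ∫ y in Ico (0:ℝ) 1, |φ y|) := by
  apply VV_le_of (le_max_left _ _)
  intro j hj
  refine (lvA_le hN hφ j hx).trans (le_trans ?_ (le_max_right _ _))
  have h1 : (1:ℝ) ≤ N := by exact_mod_cast (by omega : 1 ≤ N)
  have : 0 ≤ ∫ y in Ico (0:ℝ) 1, |φ y| := integral_nonneg (fun _ => abs_nonneg _)
  gcongr

lemma VV_succ {N : ℕ} (hN : 2 ≤ N) (l : ℝ) (φ : ℝ → ℝ) (m : ℕ) {i : ℕ} (hi : i < N)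
    {x : ℝ} (hx : x ∈ Ico (0:ℝ) 1) :
    VV N l φ (m+1) (((i:ℝ) + x) / N)
      = VV N (max l (∫ y in Ico (0:ℝ) 1, |φ y|)) (sb N φ i) m x := by
  induction m with
  | zero => simp only [VV, lvA_zero φ (sb_mem hN hi hx), lvA_succ hN φ 0 hx, zero_add]
  | succ m ih => rw [VV, ih, lvA_succ hN φ _ hx]; rfl

lemma bint {g : ℝ → ℝ} (hg : Measurable g) {B : ℝ} (hB : ∀ x ∈ Ico (0:ℝ) 1, |g x| ≤ B) :
    IntegrableOn g (Ico (0:ℝ) 1) := by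
  refine Measure.integrableOn_of_bounded (M := B) (by simp) hg.aestronglyMeasurable ?_
  filter_upwards [ae_restrict_mem measurableSet_Ico] with x hx using hB x hx

lemma Phi_int {N : ℕ} (hN : 2 ≤ N) {Φ : ℝ → ℝ → ℝ} (hΦ : Continuous (fun z : ℝ × ℝ => Φ z.1 z.2))
    {φ : ℝ → ℝ} (hφ : IntegrableOn φ (Ico (0:ℝ) 1)) (l : ℝ) (m : ℕ) :
    IntegrableOn (fun x => Φ (lvA N φ m x) (VV N l φ m x)) (Ico (0:ℝ) 1) := by
  set B := (N:ℝ)^m * ∫ y in Ico (0:ℝ) 1, |φ y|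
  obtain ⟨D, hD⟩ := ((isCompact_Icc (a := (0:ℝ)) (b := B)).prod
    (isCompact_Icc (a := l) (b := max l B))).exists_bound_of_continuousOn hΦ.continuousOn
  refine bint (hΦ.measurable.comp ((lvA_meas N φ m).prodMk (VV_meas N l φ m))) (B := D) ?_
  intro x hx
  exact hD (lvA N φ m x, VV N l φ m x) ⟨⟨lvA_nonneg _ _ _ _, lvA_le hN hφ m hx⟩,
    le_VV _ _ _ _ _, VV_le hN hφ l m hx⟩

lemma bell {N : ℕ} (hN : 2 ≤ N) {Φ : ℝ → ℝ → ℝ} (hΦ : Continuous (fun z : ℝ × ℝ => Φ z.1 z.2))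
    (step : ∀ (l : ℝ) (y : ℕ → ℝ), 0 < l → (∀ i, 0 ≤ y i) →
      (1/(N:ℝ)) * ∑ i ∈ Finset.range N, y i ≤ l →
      Φ ((1/(N:ℝ)) * ∑ i ∈ Finset.range N, y i) l
        ≤ (1/(N:ℝ)) * ∑ i ∈ Finset.range N, Φ (y i) (max l (y i))) (m : ℕ) :
    ∀ (φ : ℝ → ℝ) (l : ℝ), 0 < l → IntegrableOn φ (Ico (0:ℝ) 1) →
      Φ (∫ y in Ico (0:ℝ) 1, |φ y|) (max l (∫ y in Ico (0:ℝ) 1, |φ y|))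
        ≤ ∫ x in Ico (0:ℝ) 1, Φ (lvA N φ m x) (VV N l φ m x) := by
  induction m with
  | zero =>
    intro φ l hl hφ
    have e : ∫ x in Ico (0:ℝ) 1, Φ (lvA N φ 0 x) (VV N l φ 0 x) = ∫ x in Ico (0:ℝ) 1,
        Φ (∫ y in Ico (0:ℝ) 1, |φ y|) (max l (∫ y in Ico (0:ℝ) 1, |φ y|)) := by
      apply setIntegral_congr_fun measurableSet_Ico
      intro x hx
      simp only [VV, lvA_zero φ hx]
    rw [e]
    simp
  | succ m ih =>
    intro φ l hl hφ
    rw [int_split hN (Phi_int hN hΦ hφ l (m+1))]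
    have e0 := int_split hN hφ.abs
    set f := ∫ y in Ico (0:ℝ) 1, |φ y| with hf
    have e0' : f = (1/(N:ℝ)) * ∑ i ∈ Finset.range N, ∫ y in Ico (0:ℝ) 1, |sb N φ i y| := e0
    have s := step (max l f) (fun i => ∫ y in Ico (0:ℝ) 1, |sb N φ i y|)
      (lt_max_of_lt_left hl) (fun i => integral_nonneg (fun _ => abs_nonneg _))
      (by rw [← e0']; exact le_max_right _ _)
    rw [← e0'] at s
    refine s.trans ?_
    refine mul_le_mul_of_nonneg_left (Finset.sum_le_sum ?_) (by positivity)
    intro i hi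
    have hi := Finset.mem_range.1 hi
    refine (ih (sb N φ i) (max l f) (lt_max_of_lt_left hl) (sb_integrable hN hφ hi)).trans
      (le_of_eq ?_)
    apply setIntegral_congr_fun measurableSet_Ico
    intro x hx
    simp only [sb]
    rw [lvA_succ hN φ m hx, VV_succ hN l φ m hi hx]

lemma jensen0 {p : ℝ} (hp : 1 < p) {φ : ℝ → ℝ} (hφ : IntegrableOn φ (Ico (0:ℝ) 1))
    (hφp : IntegrableOn (fun x => |φ x| ^ p) (Ico (0:ℝ) 1)) :
    (∫ y in Ico (0:ℝ) 1, |φ y|) ^ p ≤ ∫ y in Ico (0:ℝ) 1, |φ y| ^ p := by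
  have : IsProbabilityMeasure (volume.restrict (Ico (0:ℝ) 1)) := ⟨by simp⟩
  exact (convexOn_rpow hp.le).map_integral_le
    (continuousOn_id.rpow_const fun _ _ => Or.inr (by linarith)) isClosed_Ici
    (Eventually.of_forall fun x => mem_Ici.2 (abs_nonneg _)) hφ.abs hφp

lemma lvAp_int {N : ℕ} (hN : 2 ≤ N) {p : ℝ} (hp : 1 < p) {φ : ℝ → ℝ}
    (hφ : IntegrableOn φ (Ico (0:ℝ) 1)) (m : ℕ) :
    IntegrableOn (fun x => lvA N φ m x ^ p) (Ico (0:ℝ) 1) :=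
  Phi_int hN (Φ := fun a _ => a ^ p)
    (continuous_fst.rpow_const fun _ => Or.inr (by linarith)) hφ 0 m

lemma VVp_int {N : ℕ} (hN : 2 ≤ N) {p : ℝ} (hp : 1 < p) {φ : ℝ → ℝ}
    (hφ : IntegrableOn φ (Ico (0:ℝ) 1)) (l : ℝ) (m : ℕ) :
    IntegrableOn (fun x => VV N l φ m x ^ p) (Ico (0:ℝ) 1) :=
  Phi_int hN (Φ := fun _ a => a ^ p)
    (continuous_snd.rpow_const fun _ => Or.inr (by linarith)) hφ l m

lemma jensen {N : ℕ} (hN : 2 ≤ N) {p : ℝ} (hp : 1 < p) (m : ℕ) : ∀ {φ : ℝ → ℝ},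
    IntegrableOn φ (Ico (0:ℝ) 1) → IntegrableOn (fun x => |φ x| ^ p) (Ico (0:ℝ) 1) →
    ∫ x in Ico (0:ℝ) 1, lvA N φ m x ^ p ≤ ∫ y in Ico (0:ℝ) 1, |φ y| ^ p := by
  induction m with
  | zero =>
    intro φ hφ hφp
    refine le_trans (le_of_eq ?_) (jensen0 hp hφ hφp)
    rw [setIntegral_congr_fun (g := fun _ => (∫ y in Ico (0:ℝ) 1, |φ y|) ^ p) measurableSet_Ico]
    · simp
    · intro x hx
      simp only [lvA_zero φ hx]
  | succ m ih =>
    intro φ hφ hφp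
    rw [int_split hN (lvAp_int hN hp hφ (m+1)), int_split hN hφp]
    refine mul_le_mul_of_nonneg_left (Finset.sum_le_sum ?_) (by positivity)
    intro i hi
    have hi := Finset.mem_range.1 hi
    refine le_trans (le_of_eq ?_) (ih (sb_integrable hN hφ hi) (sb_integrable hN hφp hi))
    apply setIntegral_congr_fun measurableSet_Ico
    intro x hx
    simp only [sb]
    rw [lvA_succ hN φ m hx]
    rfl

lemma Phi_cont {p : ℝ} (hp : 1 < p) (C : ℝ) :
    Continuous (fun z : ℝ × ℝ => z.2 ^ p - C * z.2 ^ (p-1) * z.1) := by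
  have h1 : Continuous (fun z : ℝ × ℝ => z.2 ^ p) :=
    continuous_snd.rpow_const fun _ => Or.inr (by linarith)
  have h2 : Continuous (fun z : ℝ × ℝ => z.2 ^ (p-1)) :=
    continuous_snd.rpow_const fun _ => Or.inr (by linarith)
  fun_prop

/-- pointwise lower bound -/
lemma pt_lower {N : ℕ} (hN : 2 ≤ N) {p C : ℝ} (hp : 1 < p) 
    (hC : C * ((N:ℝ)^p - N) = (N:ℝ)^p - 1) (hC1 : 1 ≤ C) {l y : ℝ} (hl : 0 < l)
    (hyN : y ≤ N * l) :
    l ^ p - C * l ^ (p-1) * y ≤ (max l y) ^ p - C * (max l y) ^ (p-1) * y := by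
  rcases le_total y l with h | h
  · rw [max_eq_left h]
  rw [max_eq_right h]
  have hy0 : 0 < y := lt_of_lt_of_le hl h
  obtain ⟨t, ht⟩ : ∃ t, t = y / l := ⟨_, rfl⟩
  have hyt : y = t * l := by rw [ht]; field_simp
  have ht1 : 1 ≤ t := by rw [ht, le_div_iff₀ hl]; linarith
  have htN : t ≤ N := by rw [ht, div_le_iff₀ hl]; linarith
  have hN1 : (1:ℝ) < N := by exact_mod_cast (by omega : 1 < N)
  have e1 : y ^ (p-1) * y = y ^ p := by
    rw [← Real.rpow_add_one hy0.ne']; ring_nf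
  have e2 : l ^ (p-1) * l = l ^ p := by
    rw [← Real.rpow_add_one hl.ne']; ring_nf
  have e3 : y ^ p = t ^ p * l ^ p := by
    rw [hyt, Real.mul_rpow (by linarith) hl.le]
  have e4 : t ^ p * (N - 1) ≤ (N - t) + (t - 1) * (N:ℝ) ^ p := by
    have hn : (N:ℝ) - 1 ≠ 0 := by linarith
    have this := (convexOn_rpow hp.le).2 (mem_Ici.2 zero_le_one)
      (mem_Ici.2 (by linarith : 0 ≤ (N:ℝ)))
      (show 0 ≤ ((N:ℝ) - t)/((N:ℝ)-1) from div_nonneg (by linarith) (by linarith))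
      (show 0 ≤ (t-1)/((N:ℝ)-1) from div_nonneg (by linarith) (by linarith))
      (by field_simp; ring)
    simp only [smul_eq_mul, Real.one_rpow] at this
    have e : (N - t)/((N:ℝ)-1) * 1 + (t-1)/((N:ℝ)-1) * N = t := by
      have : (N:ℝ) - 1 ≠ 0 := by linarith
      field_simp; ring
    rw [e] at this
    calc t ^ p * (N - 1) ≤ ((N - t)/((N:ℝ)-1) * 1 + (t-1)/((N:ℝ)-1) * (N:ℝ)^p) * (N - 1) := by
          apply mul_le_mul_of_nonneg_right this; linarith
      _ = _ := by
          have : (N:ℝ) - 1 ≠ 0 := by linarith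
          field_simp
  have hNp : (N:ℝ) < (N:ℝ)^p := by
    simpa using Real.rpow_lt_rpow_of_exponent_lt hN1 hp
  have e5 : 1 - C * t ≤ (1 - C) * t ^ p := by
    have h6 : (C - 1) * ((N:ℝ)^p - N) = N - 1 := by linarith
    have h7 : 0 < (N:ℝ)^p - N := by linarith
    have h8 : (C-1) * (t ^ p * (N-1)) ≤ (C-1) * ((N - t) + (t - 1) * (N:ℝ) ^ p) :=
      mul_le_mul_of_nonneg_left e4 (by linarith)
    have h9 : (C-1) * ((N - t) + (t - 1) * (N:ℝ) ^ p) = (C * t - 1) * (N-1) := by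
      linear_combination (t - 1) * hC - (t-1) * h6 + t * h6 -h6
    nlinarith
  have hlp : 0 < l ^ p := Real.rpow_pos_of_pos hl p
  have a1 : C * y ^ (p-1) * y = C * (t ^ p * l ^ p) := by rw [mul_assoc, e1, e3]
  have a2 : C * l ^ (p-1) * y = C * t * l ^ p := by rw [hyt, ← e2]; ring
  rw [a1, a2, e3]
  nlinarith [mul_le_mul_of_nonneg_right e5 hlp.le]

lemma pt_upper {p q : ℝ} (hp : 1 < p) (hq : q * (p - 1) = p)  {l y : ℝ} (hl : 0 < l) :
    (max l y) ^ p - q * (max l y) ^ (p-1) * y ≤ l ^ p - q * l ^ (p-1) * y := by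
  rcases le_total y l with h | h
  · rw [max_eq_left h]
  rw [max_eq_right h]
  have hy0 : 0 < y := lt_of_lt_of_le hl h
  obtain ⟨t, ht⟩ : ∃ t, t = y / l := ⟨_, rfl⟩
  have hyt : y = t * l := by rw [ht]; field_simp
  have ht1 : 1 ≤ t := by rw [ht, le_div_iff₀ hl]; linarith
  have e1 : y ^ (p-1) * y = y ^ p := by
    rw [← Real.rpow_add_one hy0.ne']; ring_nf
  have e2 : l ^ (p-1) * l = l ^ p := by
    rw [← Real.rpow_add_one hl.ne']; ring_nf
  have e3 : y ^ p = t ^ p * l ^ p := by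
    rw [hyt, Real.mul_rpow (by linarith) hl.le]
  have e4 : 1 + p * (t - 1) ≤ t ^ p := by
    have := one_add_mul_self_le_rpow_one_add (s := t - 1) (by linarith) hp.le
    simpa using this
  have e5 : (1 - q) * t ^ p ≤ 1 - q * t := by
    have h6 : (q - 1) * (p-1) = 1 := by linarith
    have : 0 < q - 1 := by
      by_contra hh
      nlinarith
    nlinarith
  have hlp : 0 < l ^ p := Real.rpow_pos_of_pos hl p
  have a1 : q * y ^ (p-1) * y = q * (t ^ p * l ^ p) := by rw [mul_assoc, e1, e3]
  have a2 : q * l ^ (p-1) * y = q * t * l ^ p := by rw [hyt, ← e2]; ring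
  rw [a1, a2, e3]
  nlinarith [mul_le_mul_of_nonneg_right e5 hlp.le]

lemma pt_young {p q : ℝ} (hp : 1 < p) (hq : 1 < q) {M y : ℝ} (hM : 0 < M) (hy : 0 ≤ y) :
    M ^ p / 2 - q * (2*q) ^ (p-1) * y ^ p ≤ M ^ p - q * M ^ (p-1) * y := by
  have e1 : M ^ (p-1) * M = M ^ p := by
    rw [← Real.rpow_add_one hM.ne']; ring_nf
  have hMp : 0 < M ^ (p-1) := Real.rpow_pos_of_pos hM _
  have hyp : 0 ≤ y ^ p := Real.rpow_nonneg hy _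
  have hqp : 0 < (2*q) ^ (p-1) := Real.rpow_pos_of_pos (by linarith) _
  rcases le_total (2 * q * y) M with h | h
  · have : q * M ^ (p-1) * y ≤ M ^ p / 2 := by
      rw [← e1]; nlinarith
    have : 0 ≤ q * (2*q) ^ (p-1) * y ^ p := by positivity
    linarith
  · have hy0 : 0 < y := by
      by_contra hh
      nlinarith
    have : M ^ (p-1) ≤ (2*q) ^ (p-1) * y ^ (p-1) := by
      rw [← Real.mul_rpow (by linarith) hy]
      exact Real.rpow_le_rpow hM.le h (by linarith)
    have e2 : y ^ (p-1) * y = y ^ p := by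
      rw [← Real.rpow_add_one hy0.ne']; ring_nf
    have : q * M ^ (p-1) * y ≤ q * (2*q) ^ (p-1) * y ^ p := by
      rw [← e2]
      calc q * M ^ (p-1) * y ≤ q * ((2*q) ^ (p-1) * y ^ (p-1)) * y := by gcongr
        _ = _ := by ring
    have : 0 < M ^ p := Real.rpow_pos_of_pos hM _
    linarith

lemma lower_m {N : ℕ} (hN : 2 ≤ N) {p C : ℝ} (hp : 1 < p) 
    (hC : C * ((N:ℝ)^p - N) = (N:ℝ)^p - 1) (hC1 : 1 ≤ C) {l : ℝ} (hl : 0 < l)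
    {φ : ℝ → ℝ} (hφ : IntegrableOn φ (Ico (0:ℝ) 1)) (hfl : ∫ y in Ico (0:ℝ) 1, |φ y| ≤ l) (m : ℕ) :
    l ^ p - C * l ^ (p-1) * (∫ y in Ico (0:ℝ) 1, |φ y|) +
      C * ∫ x in Ico (0:ℝ) 1, lvA N φ m x ^ p ≤ ∫ x in Ico (0:ℝ) 1, VV N l φ m x ^ p := by
  have hN0 : (0:ℝ) < N := by positivity
  have := bell hN (Φ := fun y M => M ^ p - C * M ^ (p-1) * y) (Phi_cont hp C) (by
    intro l y hl hy hle
    have : ∀ i ∈ Finset.range N, l ^ p - C * l ^ (p-1) * y i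
        ≤ (max l (y i)) ^ p - C * (max l (y i)) ^ (p-1) * y i := by
      intro i hi
      apply pt_lower hN hp hC hC1 hl
      have h1 := Finset.single_le_sum (fun j _ => hy j) hi
      rw [one_div, inv_mul_le_iff₀ hN0] at hle
      linarith
    have h2 := mul_le_mul_of_nonneg_left (Finset.sum_le_sum this)
      (by positivity : 0 ≤ 1 / (N:ℝ))
    refine le_trans (le_of_eq ?_) h2
    rw [Finset.sum_sub_distrib, ← Finset.mul_sum]
    simp
    field_simp) m φ l hl hφ
  simp only [max_eq_left hfl] at this
  have h3 : ∫ x in Ico (0:ℝ) 1, (VV N l φ m x ^ p - C * VV N l φ m x ^ (p-1) * lvA N φ m x)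
      ≤ ∫ x in Ico (0:ℝ) 1, (VV N l φ m x ^ p - C * lvA N φ m x ^ p) := by
    refine setIntegral_mono (f := fun x => VV N l φ m x ^ p - C * VV N l φ m x ^ (p-1) * lvA N φ m x)
      (g := fun x => VV N l φ m x ^ p - C * lvA N φ m x ^ p)
      (Phi_int hN (Φ := fun y M => M ^ p - C * M ^ (p-1) * y) (Phi_cont hp C) hφ l m)
      ((VVp_int hN hp hφ l m).sub ((lvAp_int hN hp hφ m).const_mul C)) ?_
    intro x
    have h4 := lvA_nonneg N φ m x
    have h5 := lvA_le_VV N l φ m x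
    have h6 : lvA N φ m x ^ p = lvA N φ m x ^ (p-1) * lvA N φ m x := by
      rcases h4.eq_or_lt with h | h
      · rw [← h, Real.zero_rpow (by linarith)]; simp
      · rw [← Real.rpow_add_one h.ne']; ring_nf
    have h7 : lvA N φ m x ^ (p-1) ≤ VV N l φ m x ^ (p-1) :=
      Real.rpow_le_rpow h4 h5 (by linarith)
    have : C * lvA N φ m x ^ p ≤ C * VV N l φ m x ^ (p-1) * lvA N φ m x := by
      rw [h6, mul_assoc]; gcongr
    simp only
    linarith
  rw [integral_sub (VVp_int hN hp hφ l m) ((lvAp_int hN hp hφ m).const_mul C),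
    integral_const_mul] at h3
  linarith

lemma doob_m {N : ℕ} (hN : 2 ≤ N) {p : ℝ} (hp : 1 < p) {φ : ℝ → ℝ} {f : ℝ} (hf : 0 < f)
    (hφ : IntegrableOn φ (Ico (0:ℝ) 1)) (hfl : ∫ y in Ico (0:ℝ) 1, |φ y| = f)
    (hφp : IntegrableOn (fun x => |φ x| ^ p) (Ico (0:ℝ) 1)) (m : ℕ) :
    ∫ x in Ico (0:ℝ) 1, VV N f φ m x ^ p ≤ 2 * (p/(p-1) * (2*(p/(p-1))) ^ (p-1)) *
      ∫ y in Ico (0:ℝ) 1, |φ y| ^ p := by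
  have hN0 : (0:ℝ) < N := by positivity
  obtain ⟨q, hq⟩ : ∃ q, q = p / (p-1) := ⟨_, rfl⟩
  have hq1 : q * (p-1) = p := by
    have : p - 1 ≠ 0 := by linarith
    rw [hq]; field_simp
  have hq2 : 1 < q := by rw [hq, one_lt_div (by linarith)]; linarith
  rw [← hq]
  have := bell hN (Φ := fun y M => -(M ^ p - q * M ^ (p-1) * y)) (Phi_cont hp q).neg (by
    intro l y hl hy hle
    have : ∀ i ∈ Finset.range N, -(l ^ p - q * l ^ (p-1) * y i)
        ≤ -((max l (y i)) ^ p - q * (max l (y i)) ^ (p-1) * y i) := by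
      intro i hi
      exact neg_le_neg (pt_upper hp hq1 hl)
    have h2 := mul_le_mul_of_nonneg_left (Finset.sum_le_sum this)
      (by positivity : 0 ≤ 1 / (N:ℝ))
    refine le_trans (le_of_eq ?_) h2
    rw [Finset.sum_neg_distrib, Finset.sum_sub_distrib, ← Finset.mul_sum]
    simp
    field_simp) m φ f hf hφ
  simp only [hfl, max_self] at this
  rw [integral_neg] at this
  have h3 : ∫ x in Ico (0:ℝ) 1, (VV N f φ m x ^ p / 2 - q * (2*q) ^ (p-1) * lvA N φ m x ^ p) ≤
    ∫ x in Ico (0:ℝ) 1, (VV N f φ m x ^ p - q * VV N f φ m x ^ (p-1) * lvA N φ m x) := by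
    refine setIntegral_mono
      (f := fun x => VV N f φ m x ^ p / 2 - q * (2*q) ^ (p-1) * lvA N φ m x ^ p)
      (g := fun x => VV N f φ m x ^ p - q * VV N f φ m x ^ (p-1) * lvA N φ m x)
      (((VVp_int hN hp hφ f m).div_const 2).sub ((lvAp_int hN hp hφ m).const_mul _))
      (Phi_int hN (Φ := fun y M => M ^ p - q * M ^ (p-1) * y) (Phi_cont hp q) hφ f m) ?_
    intro x
    exact pt_young hp hq2 (hf.trans_le (le_VV _ _ _ _ _)) (lvA_nonneg _ _ _ _)
  rw [integral_sub ((VVp_int hN hp hφ f m).div_const 2) ((lvAp_int hN hp hφ m).const_mul _),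
    integral_const_mul, integral_div] at h3
  have h4 := jensen hN hp m hφ hφp
  have h5 : 0 ≤ q * (2*q) ^ (p-1) :=
    mul_nonneg (by linarith) (Real.rpow_nonneg (by linarith) _)
  have h6 : f ^ p - q * f ^ (p-1) * f ≤ 0 := by
    have : f ^ (p-1) * f = f ^ p := by
      rw [← Real.rpow_add_one hf.ne']; ring_nf
    rw [mul_assoc, this]
    nlinarith [Real.rpow_pos_of_pos hf p]
  nlinarith [mul_le_mul_of_nonneg_left h4 h5]

end
noncomputable section

def GG (N : ℕ) (φ : ℝ → ℝ) (x : ℝ) : ℝ := ⨆ m, lvA N φ m x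

lemma GG_meas (N : ℕ) (φ : ℝ → ℝ) : Measurable (GG N φ) :=
  Measurable.iSup fun m => lvA_meas N φ m

lemma GG_nonneg (N : ℕ) (φ : ℝ → ℝ) (x : ℝ) : 0 ≤ GG N φ x :=
  Real.iSup_nonneg fun m => lvA_nonneg N φ m x

lemma lvA_tendsto {N : ℕ} (hN : 2 ≤ N) {φ : ℝ → ℝ} (hφ : IntegrableOn φ (Ico (0:ℝ) 1)) :
    ∀ᵐ x ∂(volume.restrict (Ico (0:ℝ) 1)),
      Tendsto (fun m => lvA N φ m x) atTop (nhds |φ x|) := by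
  have hN1 : (1:ℝ) < N := by exact_mod_cast (by omega : 1 < N)
  set g : ℝ → ℝ := (Ico (0:ℝ) 1).indicator (fun x => |φ x|) with hg
  have hgi : Integrable g := (integrable_indicator_iff measurableSet_Ico).2 hφ.abs
  have h := IsUnifLocDoublingMeasure.ae_tendsto_average volume hgi.locallyIntegrable 1
  rw [ae_restrict_iff' measurableSet_Ico]
  filter_upwards [h] with x hx hx1
  have := hx (l := atTop) (fun m : ℕ => ((⌊(N : ℝ) ^ m * x⌋₊ : ℝ) + 1/2) / (N:ℝ)^m)
    (fun m => (1/2) / (N:ℝ)^m) (by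
      rw [tendsto_nhdsWithin_iff]
      refine ⟨?_, Eventually.of_forall fun m => ?_⟩
      · exact tendsto_const_nhds.div_atTop (tendsto_pow_atTop_atTop_of_one_lt hN1)
      · simp only [mem_Ioi]; positivity) (by
      refine Eventually.of_forall fun m => ?_
      have hN0 : (0:ℝ) < (N:ℝ) ^ m := by positivity
      have hm := (mem_adicItv_iff (m := m) hN hx1.1).2 rfl
      rw [adicItv, mem_Ico] at hm
      rw [Real.closedBall_eq_Icc, mem_Icc, one_mul]
      constructor
      · convert hm.1 using 1; ring
      · convert hm.2.le using 1; ring)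
  have e : g x = |φ x| := by rw [hg, indicator_of_mem hx1]
  rw [e] at this
  refine this.congr fun m => ?_
  have hN0 : (0:ℝ) < (N:ℝ) ^ m := by positivity
  unfold lvA adicAvg
  set k := ⌊(N : ℝ) ^ m * x⌋₊ with hk
  have hb : Metric.closedBall (((k : ℝ) + 1/2) / (N:ℝ)^m) ((1/2) / (N:ℝ)^m)
      = Icc ((k:ℝ)/(N:ℝ)^m) (((k:ℝ)+1)/(N:ℝ)^m) := by
    rw [Real.closedBall_eq_Icc]; congr 1 <;> ring
  rw [hb, setAverage_eq, integral_Icc_eq_integral_Ioc, ← integral_Ico_eq_integral_Ioc]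
  have hv : volume.real (Icc ((k:ℝ)/(N:ℝ)^m) (((k:ℝ)+1)/(N:ℝ)^m)) = ((N:ℝ)^m)⁻¹ := by
    rw [Real.volume_real_Icc_of_le (by gcongr; simp)]
    field_simp; ring
  rw [hv, inv_inv, smul_eq_mul]
  congr 1
  apply setIntegral_congr_fun measurableSet_Ico
  intro y hy
  rw [hg, indicator_of_mem]
  exact adicItv_subset hN (floor_lt_pow hN m hx1) hy

lemma GG_bdd {N : ℕ} (hN : 2 ≤ N) {p : ℝ} (hp : 1 < p) {φ : ℝ → ℝ} {f : ℝ} (hf : 0 < f)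
    (hφ : IntegrableOn φ (Ico (0:ℝ) 1)) (hfl : ∫ y in Ico (0:ℝ) 1, |φ y| = f)
    (hφp : IntegrableOn (fun x => |φ x| ^ p) (Ico (0:ℝ) 1)) :
    (∀ᵐ x ∂(volume.restrict (Ico (0:ℝ) 1)), BddAbove (range fun m => lvA N φ m x)) ∧
    IntegrableOn (fun x => GG N φ x ^ p) (Ico (0:ℝ) 1) := by
  set K := 2 * (p/(p-1) * (2*(p/(p-1))) ^ (p-1)) * ∫ y in Ico (0:ℝ) 1, |φ y| ^ p with hK
  have hV0 : ∀ m x, 0 ≤ VV N f φ m x := fun m x => hf.le.trans (le_VV _ _ _ _ _)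
  set b : ℝ → ENNReal := fun x => ⨆ m, ENNReal.ofReal (VV N f φ m x ^ p) with hb
  have hm : ∀ m, Measurable (fun x => ENNReal.ofReal (VV N f φ m x ^ p)) := fun m =>
    ((VV_meas N f φ m).pow_const p).ennreal_ofReal
  have hbi : ∫⁻ x in Ico (0:ℝ) 1, b x ≤ ENNReal.ofReal K := by
    rw [hb, lintegral_iSup hm]
    · refine iSup_le fun m => ?_
      rw [← ofReal_integral_eq_lintegral_ofReal (VVp_int hN hp hφ f m)
        (Eventually.of_forall fun x => Real.rpow_nonneg (hV0 m x) p)]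
      exact ENNReal.ofReal_le_ofReal (doob_m hN hp hf hφ hfl hφp m)
    · intro i j hij x
      exact ENNReal.ofReal_le_ofReal (Real.rpow_le_rpow (hV0 i x) (VV_mono N f φ x hij)
        (by linarith))
  have hbf : ∀ᵐ x ∂(volume.restrict (Ico (0:ℝ) 1)), b x < ⊤ :=
    ae_lt_top (Measurable.iSup hm) (hbi.trans_lt ENNReal.ofReal_lt_top).ne
  have hA : ∀ x, b x < ⊤ → ∀ m, lvA N φ m x ≤ (b x).toReal ^ (1/p) := by
    intro x hx m
    have h1 : VV N f φ m x ^ p ≤ (b x).toReal := by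
      rw [← ENNReal.ofReal_le_iff_le_toReal hx.ne]
      exact le_iSup (fun m => ENNReal.ofReal (VV N f φ m x ^ p)) m
    have h2 := Real.rpow_le_rpow (Real.rpow_nonneg (hV0 m x) p) h1
      (by positivity : 0 ≤ 1/p)
    rw [← Real.rpow_mul (hV0 m x), mul_one_div_cancel (by linarith), Real.rpow_one] at h2
    exact (lvA_le_VV N f φ m x).trans h2
  constructor
  · filter_upwards [hbf] with x hx
    exact ⟨_, by rintro _ ⟨m, rfl⟩; exact hA x hx m⟩
  · refine ⟨((GG_meas N φ).pow_const p).aestronglyMeasurable, ?_⟩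
    rw [hasFiniteIntegral_iff_ofReal (Eventually.of_forall fun x =>
      Real.rpow_nonneg (GG_nonneg N φ x) p)]
    refine lt_of_le_of_lt (lintegral_mono_ae ?_) (hbi.trans_lt ENNReal.ofReal_lt_top)
    filter_upwards [hbf] with x hx
    rw [ENNReal.ofReal_le_iff_le_toReal hx.ne]
    have h1 : GG N φ x ≤ (b x).toReal ^ (1/p) := ciSup_le (hA x hx)
    have h2 := Real.rpow_le_rpow (GG_nonneg N φ x) h1 (by linarith : 0 ≤ p)
    rwa [← Real.rpow_mul ENNReal.toReal_nonneg, one_div_mul_cancel (by linarith),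
      Real.rpow_one] at h2

lemma maxGG_int {p : ℝ} (hp : 1 < p) {G : ℝ → ℝ} (hGm : Measurable G) (hG0 : ∀ x, 0 ≤ G x)
    (hG : IntegrableOn (fun x => G x ^ p) (Ico (0:ℝ) 1)) {l : ℝ} (hl : 0 < l) :
    IntegrableOn (fun x => (max l (G x)) ^ p) (Ico (0:ℝ) 1) := by
  refine Integrable.mono' ((integrable_const (l ^ p)).add hG)
    ((measurable_const.max hGm).pow_const p).aestronglyMeasurable
    (Eventually.of_forall fun x => ?_)
  have h1 : 0 ≤ (max l (G x)) ^ p := Real.rpow_nonneg (le_max_of_le_left hl.le) _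
  have h2 : 0 ≤ l ^ p := Real.rpow_nonneg hl.le _
  have h3 : 0 ≤ G x ^ p := Real.rpow_nonneg (hG0 x) _
  rw [Real.norm_of_nonneg h1]
  simp only [Pi.add_apply]
  rcases le_total l (G x) with h | h
  · rw [max_eq_right h]; linarith
  · rw [max_eq_left h]; linarith

lemma lower_lim {N : ℕ} (hN : 2 ≤ N) {p C : ℝ} (hp : 1 < p)
    (hC : C * ((N:ℝ)^p - N) = (N:ℝ)^p - 1) (hC1 : 1 ≤ C) {φ : ℝ → ℝ} {f : ℝ} (hf : 0 < f)
    (hφ : IntegrableOn φ (Ico (0:ℝ) 1)) (hfl : ∫ y in Ico (0:ℝ) 1, |φ y| = f)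
    (hφp : IntegrableOn (fun x => |φ x| ^ p) (Ico (0:ℝ) 1)) {l : ℝ} (hl : f ≤ l) :
    l ^ p - C * l ^ (p-1) * f + C * ∫ x in Ico (0:ℝ) 1, |φ x| ^ p
      ≤ ∫ x in Ico (0:ℝ) 1, (max l (GG N φ x)) ^ p := by
  have hl0 : 0 < l := hf.trans_le hl
  obtain ⟨hbd, hGi⟩ := GG_bdd hN hp hf hφ hfl hφp
  have hmi := maxGG_int hp (GG_meas N φ) (GG_nonneg N φ) hGi hl0
  set D := ∫ x in Ico (0:ℝ) 1, (max l (GG N φ x)) ^ p with hD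
  have h1 : ∀ m, ∫ x in Ico (0:ℝ) 1, VV N l φ m x ^ p ≤ D := by
    intro m
    refine integral_mono_ae (VVp_int hN hp hφ l m) hmi ?_
    filter_upwards [hbd] with x hx
    refine Real.rpow_le_rpow (hl0.le.trans (le_VV _ _ _ _ _)) ?_ (by linarith)
    exact VV_le_of (le_max_left _ _) fun j _ => (le_ciSup hx j).trans (le_max_right _ _)
  have h2 : ∀ m, ∫ x in Ico (0:ℝ) 1, lvA N φ m x ^ p
      ≤ (D - (l ^ p - C * l ^ (p-1) * f)) / C := by
    intro m
    have := lower_m hN hp hC hC1 hl0 hφ (hfl.le.trans hl) m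
    rw [hfl] at this
    rw [le_div_iff₀ (by linarith)]
    linarith [h1 m]
  have h3 : ∫ x in Ico (0:ℝ) 1, |φ x| ^ p ≤ (D - (l ^ p - C * l ^ (p-1) * f)) / C := by
    have h0 : 0 ≤ (D - (l ^ p - C * l ^ (p-1) * f)) / C :=
      le_trans (integral_nonneg fun x => Real.rpow_nonneg (lvA_nonneg _ _ _ _) _) (h2 0)
    rw [← ENNReal.ofReal_le_ofReal_iff h0,
      ofReal_integral_eq_lintegral_ofReal hφp
        (Eventually.of_forall fun x => Real.rpow_nonneg (abs_nonneg _) p)]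
    calc ∫⁻ x in Ico (0:ℝ) 1, ENNReal.ofReal (|φ x| ^ p)
        = ∫⁻ x in Ico (0:ℝ) 1, liminf (fun m => ENNReal.ofReal (lvA N φ m x ^ p)) atTop := by
          apply lintegral_congr_ae
          filter_upwards [lvA_tendsto hN hφ] with x hx
          symm
          apply Tendsto.liminf_eq
          exact ENNReal.tendsto_ofReal (hx.rpow_const (Or.inr (by linarith)))
      _ ≤ liminf (fun m => ∫⁻ x in Ico (0:ℝ) 1, ENNReal.ofReal (lvA N φ m x ^ p)) atTop :=
          lintegral_liminf_le fun m => ((lvA_meas N φ m).pow_const p).ennreal_ofReal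
      _ ≤ liminf (fun m : ℕ => ENNReal.ofReal ((D - (l ^ p - C * l ^ (p-1) * f)) / C)) atTop := by
          refine liminf_le_liminf (Eventually.of_forall fun m => ?_)
          rw [← ofReal_integral_eq_lintegral_ofReal (lvAp_int hN hp hφ m)
            (Eventually.of_forall fun x => Real.rpow_nonneg (lvA_nonneg _ _ _ _) p)]
          exact ENNReal.ofReal_le_ofReal (h2 m)
      _ = _ := liminf_const _
  rw [le_div_iff₀ (by linarith)] at h3
  linarith

end
noncomputable section

lemma exists_btw {A B : Set ℝ} (hA : MeasurableSet A) (hB : MeasurableSet B) (hAB : A ⊆ B)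
    (hB1 : B ⊆ Ico (0:ℝ) 1) {κ : ℝ} (hκ0 : 0 ≤ κ) (h1 : volume A ≤ ENNReal.ofReal κ)
    (h2 : ENNReal.ofReal κ ≤ volume B) :
    ∃ E, MeasurableSet E ∧ A ⊆ E ∧ E ⊆ B ∧ volume E = ENNReal.ofReal κ := by
  have hsub : ∀ t, A ∪ (B ∩ Iio t) ⊆ Ico (0:ℝ) 1 := fun t =>
    union_subset (hAB.trans hB1) (inter_subset_left.trans hB1)
  have hfin : ∀ S : Set ℝ, S ⊆ Ico (0:ℝ) 1 → volume S ≠ ⊤ := fun S hS =>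
    ne_top_of_le_ne_top (by simp) (measure_mono hS)
  have hlip : LipschitzWith 1 (fun t => volume.real (A ∪ (B ∩ Iio t))) := by
    apply LipschitzWith.of_le_add
    intro x y
    have : A ∪ (B ∩ Iio x) ⊆ (A ∪ (B ∩ Iio y)) ∪ Ico y x := by
      rintro z (hz | ⟨hz, hz2⟩)
      · exact Or.inl (Or.inl hz)
      · rcases lt_or_ge z y with h | h
        · exact Or.inl (Or.inr ⟨hz, h⟩)
        · exact Or.inr ⟨h, hz2⟩
    have h3 := measureReal_mono this (μ := volume)
      (measure_union_ne_top (hfin _ (hsub y)) (by simp))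
    refine h3.trans ((measureReal_union_le _ _).trans ?_)
    gcongr
    rw [Real.volume_real_Ico, Real.dist_eq]
    exact max_le (le_abs_self _) (abs_nonneg _)
  have e0 : A ∪ (B ∩ Iio 0) = A := by
    apply union_eq_left.2
    rintro z ⟨hz, hz2⟩
    exact absurd (hB1 hz).1 (not_le.2 hz2)
  have e1 : A ∪ (B ∩ Iio 1) = B := by
    rw [inter_eq_left.2 (show B ⊆ Iio 1 from fun z hz => (hB1 hz).2)]
    exact union_eq_right.2 hAB
  have := intermediate_value_Icc (zero_le_one (α := ℝ)) hlip.continuous.continuousOn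
    (show κ ∈ _ from ⟨by
      simp only [e0]
      exact ENNReal.toReal_le_of_le_ofReal hκ0 h1, by
      simp only [e1]
      exact (ENNReal.ofReal_le_iff_le_toReal (hfin _ hB1)).1 h2⟩)
  obtain ⟨t, -, ht⟩ := this
  refine ⟨A ∪ (B ∩ Iio t), hA.union (hB.inter measurableSet_Iio), subset_union_left,
    union_subset hAB inter_subset_left, ?_⟩
  simp only at ht
  rw [← ht, Measure.real, ENNReal.ofReal_toReal (hfin _ (hsub t))]

lemma exists_level {G : ℝ → ℝ} (hG : Measurable G) {f κ : ℝ}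
    (hfG : ∀ᵐ x ∂(volume.restrict (Ico (0:ℝ) 1)), f ≤ G x) (hκ0 : 0 < κ) (hκ1 : κ ≤ 1) :
    ∃ l, f ≤ l ∧ ∃ E, MeasurableSet E ∧ E ⊆ Ico (0:ℝ) 1 ∧ volume E = ENNReal.ofReal κ ∧
      (∀ x ∈ Ico (0:ℝ) 1, l < G x → x ∈ E) ∧ (∀ x ∈ E, l ≤ G x) := by
  set ν := volume.restrict (Ico (0:ℝ) 1) with hν
  have hνp : IsProbabilityMeasure ν := ⟨by simp [hν]⟩
  set S : Set ℝ := {t | f ≤ t ∧ ν {x | t < G x} ≤ ENNReal.ofReal κ} with hS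
  have hne : S.Nonempty := by
    have h1 : Tendsto (fun n : ℕ => ν {x | (n:ℝ) < G x}) atTop (nhds (ν (⋂ n : ℕ, {x | (n:ℝ) < G x}))) := by
      apply tendsto_measure_iInter_atTop
      · intro n; exact (measurableSet_lt measurable_const hG).nullMeasurableSet
      · intro i j hij x hx
        have hij' : (i:ℝ) ≤ j := by exact_mod_cast hij
        exact lt_of_le_of_lt hij' hx
      · exact ⟨0, measure_ne_top _ _⟩
    have h2 : (⋂ n : ℕ, {x | (n:ℝ) < G x}) = ∅ := by
      ext x
      simp only [mem_iInter, mem_ofPred_eq, mem_empty_iff_false, iff_false, not_forall, not_lt]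
      exact exists_nat_ge (G x)
    rw [h2, measure_empty] at h1
    have h3 := (h1.eventually_lt_const (ENNReal.ofReal_pos.2 hκ0)).and
      ((tendsto_natCast_atTop_atTop (R := ℝ)).eventually_ge_atTop f)
    obtain ⟨n, hn, hn2⟩ := h3.exists
    exact ⟨n, hn2, hn.le⟩
  have hbd : BddBelow S := ⟨f, fun t ht => ht.1⟩
  set l := sInf S with hl
  have hfl : f ≤ l := le_csInf hne fun t ht => ht.1
  have hup : ∀ t, l < t → ν {x | t < G x} ≤ ENNReal.ofReal κ := by
    intro t ht
    obtain ⟨s, hs, hst⟩ := exists_lt_of_csInf_lt hne ht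
    exact (measure_mono fun x (hx : t < G x) => hst.trans hx).trans hs.2
  have hA : ν {x | l < G x} ≤ ENNReal.ofReal κ := by
    have e : {x | l < G x} = ⋃ n : ℕ, {x | l + 1/((n:ℝ)+1) < G x} := by
      ext x
      simp only [mem_ofPred_eq, mem_iUnion]
      constructor
      · intro h
        obtain ⟨n, hn⟩ := exists_nat_one_div_lt (sub_pos.2 h)
        exact ⟨n, by linarith⟩
      · rintro ⟨n, hn⟩
        have : 0 < 1/((n:ℝ)+1) := by positivity
        linarith
    rw [e, Monotone.measure_iUnion]
    · refine iSup_le fun n => hup _ ?_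
      have : 0 < 1/((n:ℝ)+1) := by positivity
      linarith
    · intro i j hij x hx
      simp only [mem_ofPred_eq] at hx ⊢
      have : 1/((j:ℝ)+1) ≤ 1/((i:ℝ)+1) := by gcongr
      linarith
  have hB : ENNReal.ofReal κ ≤ ν {x | l ≤ G x} := by
    rcases hfl.eq_or_lt with h | h
    · have : ν {x | l ≤ G x} = 1 := by
        rw [prob_compl_eq_zero_iff (measurableSet_le measurable_const hG) |>.symm]
        rw [← h]
        exact hfG
      rw [this]
      simpa using hκ1
    · have e : {x | l ≤ G x} = ⋂ n : ℕ, {x | max f (l - 1/((n:ℝ)+1)) < G x} ∪ ∅ := by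
        ext x
        simp only [mem_ofPred_eq, mem_iInter, union_empty]
        constructor
        · intro h' n
          have : 0 < 1/((n:ℝ)+1) := by positivity
          exact (max_lt h (by linarith)).trans_le h'
        · intro h'
          by_contra hc
          obtain ⟨n, hn⟩ := exists_nat_one_div_lt (sub_pos.2 (not_le.1 hc))
          have := (le_max_right _ _).trans_lt (h' n)
          linarith
      simp only [union_empty] at e
      rw [e, Antitone.measure_iInter]
      · refine le_iInf fun n => ?_
        by_contra hc
        have h3 : max f (l - 1/((n:ℝ)+1)) ∈ S := ⟨le_max_left _ _, (not_le.1 hc).le⟩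
        have h4 : l ≤ _ := csInf_le hbd h3
        have : 0 < 1/((n:ℝ)+1) := by positivity
        exact absurd (max_lt h (by linarith : l - 1/((n:ℝ)+1) < l)) (not_lt.2 h4)
      · intro i j hij x hx
        simp only [mem_ofPred_eq] at hx ⊢
        have : 1/((j:ℝ)+1) ≤ 1/((i:ℝ)+1) := by gcongr
        exact lt_of_le_of_lt (max_le_max le_rfl (by linarith)) hx
      · intro n; exact (measurableSet_lt measurable_const hG).nullMeasurableSet
      · exact ⟨0, measure_ne_top _ _⟩
  have mA : MeasurableSet {x | l < G x} := measurableSet_lt measurable_const hG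
  have mB : MeasurableSet {x | l ≤ G x} := measurableSet_le measurable_const hG
  rw [hν, Measure.restrict_apply mA] at hA
  rw [hν, Measure.restrict_apply mB] at hB
  obtain ⟨E, hE, hAE, hEB, hvE⟩ := exists_btw (mA.inter measurableSet_Ico)
    (mB.inter measurableSet_Ico)
    (inter_subset_inter_left _ fun x (hx : l < G x) => hx.le) inter_subset_right hκ0.le hA hB
  exact ⟨l, hfl, E, hE, fun x hx => (hEB hx).2, hvE, fun x hx hx2 => hAE ⟨hx2, hx⟩,
    fun x hx => (hEB hx).1⟩

/-- the scalar inequality -/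
lemma scalar_mono {p C κ f l : ℝ} (hp : 1 < p) (hC : 0 ≤ C) (hκ : (p-1)/p * C ≤ κ)
    (hf : 0 < f) (hl : f ≤ l) :
    κ * f ^ p - C * f ^ p ≤ κ * l ^ p - C * l ^ (p-1) * f := by
  have hl0 : 0 < l := hf.trans_le hl
  have e1 : l ^ (p-1) * l = l ^ p := by
    rw [← Real.rpow_add_one hl0.ne']; ring_nf
  have h1 : ((p-1) * C) ≤ κ * p := by
    have : (p-1)/p * C * p = (p-1) * C := by field_simp
    rw [← this]; gcongr
  -- with t = f / l in (0,1]
  obtain ⟨t, ht⟩ : ∃ t, t = f / l := ⟨_, rfl⟩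
  have hft : f = t * l := by rw [ht]; field_simp
  have ht0 : 0 < t := by rw [ht]; positivity
  have ht1 : t ≤ 1 := by rw [ht, div_le_one hl0]; exact hl
  have e3 : f ^ p = t ^ p * l ^ p := by
    rw [hft, Real.mul_rpow (by linarith) hl0.le]
  have hlp : 0 < l ^ p := Real.rpow_pos_of_pos hl0 p
  have htp : t ^ p ≤ 1 := Real.rpow_le_one ht0.le ht1 (by linarith)
  have hb : 1 + p * (t - 1) ≤ t ^ p := by
    have := one_add_mul_self_le_rpow_one_add (s := t - 1) (by linarith) hp.le
    simpa using this
  have key : κ * t ^ p - C * t ^ p ≤ κ - C * t := by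
    have a1 : (p-1) * C * (1 - t^p) ≤ κ * p * (1 - t^p) :=
      mul_le_mul_of_nonneg_right h1 (by linarith)
    have a2 : C * (p * (t - t^p)) ≤ C * ((p-1) * (1 - t^p)) :=
      mul_le_mul_of_nonneg_left (by nlinarith) hC
    have a3 : p * (κ * t ^ p - C * t ^ p) ≤ p * (κ - C * t) := by nlinarith
    exact le_of_mul_le_mul_left a3 (by linarith)
  have a2 : C * l ^ (p-1) * f = C * t * l ^ p := by rw [hft, ← e1]; ring
  rw [a2, e3]
  nlinarith [mul_le_mul_of_nonneg_right key hlp.le]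

end
noncomputable section

lemma lower_bound {N : ℕ} (hN : 2 ≤ N) {p C f F κ : ℝ} (hp : 1 < p)
    (hC : C * ((N:ℝ)^p - N) = (N:ℝ)^p - 1) (hC1 : 1 ≤ C) (hf : 0 < f) (hF : 0 < F)
    (hκ : (p-1)/p * C ≤ κ) (hκ1 : κ ≤ 1) {φ : ℝ → ℝ}
    (hφ0 : ∀ x ∈ Ico (0:ℝ) 1, 0 ≤ φ x) (hφf : ∫ x in Ico (0:ℝ) 1, φ x = f)
    (hφF : ∫ x in Ico (0:ℝ) 1, φ x ^ p = F) :
    κ * f ^ p + C * (F - f ^ p) ≤ supMeas N p κ φ := by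
  have hκ0 : 0 < κ := lt_of_lt_of_le (mul_pos (div_pos (by linarith) (by linarith)) (by linarith)) hκ
  have hφ : IntegrableOn φ (Ico (0:ℝ) 1) := by
    by_contra h
    rw [integral_undef h] at hφf
    linarith
  have hφp' : IntegrableOn (fun x => φ x ^ p) (Ico (0:ℝ) 1) := by
    by_contra h
    rw [integral_undef h] at hφF
    linarith
  have hfl : ∫ y in Ico (0:ℝ) 1, |φ y| = f := by
    rw [← hφf]
    exact setIntegral_congr_fun measurableSet_Ico fun x hx => abs_of_nonneg (hφ0 x hx)
  have hφp : IntegrableOn (fun x => |φ x| ^ p) (Ico (0:ℝ) 1) :=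
    hφp'.congr_fun (fun x hx => by simp only [abs_of_nonneg (hφ0 x hx)]) measurableSet_Ico
  have hFl : ∫ y in Ico (0:ℝ) 1, |φ y| ^ p = F := by
    rw [← hφF]
    exact setIntegral_congr_fun measurableSet_Ico fun x hx => by simp only [abs_of_nonneg (hφ0 x hx)]
  obtain ⟨hbd, hGi⟩ := GG_bdd hN hp hf hφ hfl hφp
  have hfG : ∀ᵐ x ∂(volume.restrict (Ico (0:ℝ) 1)), f ≤ GG N φ x := by
    filter_upwards [hbd, ae_restrict_mem measurableSet_Ico] with x hx hx1
    rw [← hfl, ← lvA_zero (N := N) φ hx1]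
    exact le_ciSup hx 0
  obtain ⟨l, hl, E, hE, hE1, hvE, hA, hB⟩ := exists_level (GG_meas N φ) hfG hκ0 hκ1
  have hl0 : 0 < l := hf.trans_le hl
  have hmi := maxGG_int hp (GG_meas N φ) (GG_nonneg N φ) hGi hl0
  have hlow := lower_lim hN hp hC hC1 hf hφ hfl hφp hl
  rw [hFl] at hlow
  have hsc := scalar_mono hp (by linarith : 0 ≤ C) hκ hf hl
  have hEfin : volume E ≠ ⊤ := by rw [hvE]; simp
  have h1 : ∫ x in E, GG N φ x ^ p
      = (∫ x in Ico (0:ℝ) 1, ((max l (GG N φ x)) ^ p - l ^ p)) + κ * l ^ p := by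
    have a1 : ∫ x in Ico (0:ℝ) 1, ((max l (GG N φ x)) ^ p - l ^ p)
        = ∫ x in E, ((max l (GG N φ x)) ^ p - l ^ p) := by
      apply setIntegral_eq_of_subset_of_forall_sdiff_eq_zero measurableSet_Ico hE1
      intro x hx
      have : ¬ l < GG N φ x := fun h => hx.2 (hA x hx.1 h)
      rw [max_eq_left (not_lt.1 this), sub_self]
    have a2 : ∫ x in E, ((max l (GG N φ x)) ^ p - l ^ p) = ∫ x in E, (GG N φ x ^ p - l ^ p) :=
      setIntegral_congr_fun hE fun x hx => by simp only [max_eq_right (hB x hx)]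
    rw [a1, a2, integral_sub (hGi.mono_set hE1) (integrableOn_const hEfin)]
    simp [Measure.real, hvE, ENNReal.toReal_ofReal hκ0.le]
  have h2 : ∫ x in Ico (0:ℝ) 1, ((max l (GG N φ x)) ^ p - l ^ p)
      = (∫ x in Ico (0:ℝ) 1, (max l (GG N φ x)) ^ p) - l ^ p := by
    rw [integral_sub hmi (integrableOn_const (by simp))]
    simp
  have h3 : κ * f ^ p + C * (F - f ^ p) ≤ ∫ x in E, GG N φ x ^ p := by
    rw [h1, h2]; linarith
  refine h3.trans ?_
  have hcong : ∀ S ⊆ Ico (0:ℝ) 1, MeasurableSet S →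
      ∫ x in S, adicMax N φ x ^ p = ∫ x in S, GG N φ x ^ p := fun S hS hSm =>
    setIntegral_congr_fun hSm fun x hx => by simp only [adicMax_eq hN φ (hS hx), GG]
  unfold supMeas
  refine le_csSup ⟨∫ x in Ico (0:ℝ) 1, GG N φ x ^ p, ?_⟩
    ⟨E, hE, hE1, hvE, (hcong E hE1 hE).symm⟩
  rintro z ⟨S, hS, hS1, -, rfl⟩
  rw [hcong S hS1 hS]
  exact setIntegral_mono_set hGi
    (Eventually.of_forall fun x => Real.rpow_nonneg (GG_nonneg N φ x) p) hS1.eventuallyLE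

end
noncomputable section

lemma lvA_le_B {N : ℕ} (hN : 2 ≤ N) {φ : ℝ → ℝ} {B : ℝ} (h0 : ∀ x, 0 ≤ φ x)
    (hB : ∀ x, φ x ≤ B) (m : ℕ) (x : ℝ) : lvA N φ m x ≤ B := by
  have hNm : (0:ℝ) < (N:ℝ) ^ m := by positivity
  have hB0 : 0 ≤ B := (h0 0).trans (hB 0)
  unfold lvA adicAvg
  set k := ⌊(N : ℝ) ^ m * x⌋₊
  have h1 : volume.real (adicItv N m k) = ((N:ℝ)^m)⁻¹ := by
    unfold adicItv
    rw [Real.volume_real_Ico, ← sub_div, add_sub_cancel_left, one_div]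
    exact max_eq_left (by positivity)
  have h2 : ∫ y in adicItv N m k, |φ y| ≤ B * ((N:ℝ)^m)⁻¹ := by
    rw [← h1]
    refine (le_abs_self _).trans ?_
    rw [← Real.norm_eq_abs]
    apply norm_setIntegral_le_of_norm_le_const
    · unfold adicItv; simp
    · intro y _
      rw [Real.norm_eq_abs, abs_abs, abs_of_nonneg (h0 y)]
      exact hB y
  calc (N:ℝ)^m * ∫ y in adicItv N m k, |φ y| ≤ (N:ℝ)^m * (B * ((N:ℝ)^m)⁻¹) := by gcongr
    _ = B := by field_simp

lemma lvA_bdd {N : ℕ} (hN : 2 ≤ N) {φ : ℝ → ℝ} {B : ℝ} (h0 : ∀ x, 0 ≤ φ x)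
    (hB : ∀ x, φ x ≤ B) (x : ℝ) : BddAbove (range fun m => lvA N φ m x) :=
  ⟨B, by rintro _ ⟨m, rfl⟩; exact lvA_le_B hN h0 hB m x⟩

lemma GG_le_B {N : ℕ} (hN : 2 ≤ N) {φ : ℝ → ℝ} {B : ℝ} (h0 : ∀ x, 0 ≤ φ x)
    (hB : ∀ x, φ x ≤ B) (x : ℝ) : GG N φ x ≤ B :=
  ciSup_le fun m => lvA_le_B hN h0 hB m x

lemma int_le_GG {N : ℕ} (hN : 2 ≤ N) {φ : ℝ → ℝ} {B : ℝ} (h0 : ∀ x, 0 ≤ φ x)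
    (hB : ∀ x, φ x ≤ B) {x : ℝ} (hx : x ∈ Ico (0:ℝ) 1) : ∫ y in Ico (0:ℝ) 1, φ y ≤ GG N φ x := by
  have : ∫ y in Ico (0:ℝ) 1, φ y = lvA N φ 0 x := by
    rw [lvA_zero φ hx]; simp only [abs_of_nonneg (h0 _)]
  rw [this]
  exact le_ciSup (lvA_bdd hN h0 hB x) 0

lemma GG_const {N : ℕ} (hN : 2 ≤ N) {c : ℝ} (hc : 0 ≤ c) {x : ℝ} (hx : x ∈ Ico (0:ℝ) 1) :
    GG N (fun _ => c) x = c := by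
  apply le_antisymm (GG_le_B hN (fun _ => hc) (fun _ => le_rfl) x)
  have := int_le_GG hN (φ := fun _ => c) (fun _ => hc) (fun _ => le_rfl) hx
  simpa using this

lemma GG_mul (N : ℕ) (φ : ℝ → ℝ) {c : ℝ} (hc : 0 ≤ c) (x : ℝ) :
    GG N (fun y => c * φ y) x = c * GG N φ x := by
  unfold GG
  rw [Real.mul_iSup_of_nonneg hc]
  congr 1
  ext m
  unfold lvA adicAvg
  simp only [abs_mul, abs_of_nonneg hc, integral_const_mul]
  ring

lemma GG_congr {N : ℕ} (hN : 2 ≤ N) {φ ψ : ℝ → ℝ} (h : ∀ x ∈ Ico (0:ℝ) 1, φ x = ψ x)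
    {x : ℝ} (hx : x ∈ Ico (0:ℝ) 1) : GG N φ x = GG N ψ x := by
  unfold GG
  congr 1
  ext m
  exact lvA_congr hN h m hx

lemma GG_step {N : ℕ} (hN : 2 ≤ N) {φ : ℝ → ℝ} {B : ℝ} (h0 : ∀ x, 0 ≤ φ x)
    (hB : ∀ x, φ x ≤ B) {i : ℕ} (hi : i < N) {x : ℝ} (hx : x ∈ Ico (0:ℝ) 1) :
    GG N φ (((i:ℝ) + x) / N) = max (∫ y in Ico (0:ℝ) 1, φ y) (GG N (sb N φ i) x) := by
  have hb := lvA_bdd hN h0 hB (((i:ℝ) + x) / N)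
  have hb2 := lvA_bdd hN (φ := sb N φ i) (fun y => h0 _) (fun y => hB _) x
  apply le_antisymm
  · refine ciSup_le fun m => ?_
    cases m with
    | zero =>
      rw [lvA_zero φ (sb_mem hN hi hx)]
      simp only [abs_of_nonneg (h0 _)]
      exact le_max_left _ _
    | succ m =>
      rw [lvA_succ hN φ m hx]
      exact (le_ciSup hb2 m).trans (le_max_right _ _)
  · refine max_le (int_le_GG hN h0 hB (sb_mem hN hi hx)) (ciSup_le fun m => ?_)
    rw [← lvA_succ hN φ m hx]
    exact le_ciSup hb (m+1)

def cat (N : ℕ) (ψ : ℕ → ℝ → ℝ) (x : ℝ) : ℝ := ψ ⌊(N:ℝ) * x⌋₊ ((N:ℝ) * x - ⌊(N:ℝ) * x⌋₊)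

lemma cat_meas {N : ℕ} {ψ : ℕ → ℝ → ℝ} (h : ∀ i, Measurable (ψ i)) : Measurable (cat N ψ) := by
  have h1 : Measurable (fun q : ℕ × ℝ => ψ q.1 q.2) := measurable_from_prod_countable_right h
  have h2 : Measurable fun x : ℝ => ⌊(N:ℝ) * x⌋₊ :=
    Nat.measurable_floor.comp (measurable_const.mul measurable_id)
  have h3 : Measurable fun x : ℝ => ((⌊(N:ℝ) * x⌋₊ : ℕ) : ℝ) := measurable_from_top.comp h2
  exact h1.comp (h2.prodMk ((measurable_const.mul measurable_id).sub h3))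

lemma sb_cat {N : ℕ} (hN : 2 ≤ N) (ψ : ℕ → ℝ → ℝ) (i : ℕ) {x : ℝ} (hx : x ∈ Ico (0:ℝ) 1) :
    sb N (cat N ψ) i x = ψ i x := by
  have hN0 : (0:ℝ) < N := by positivity
  unfold sb cat
  have e : (N:ℝ) * (((i:ℝ) + x) / N) = i + x := by field_simp
  have e2 : ⌊(i:ℝ) + x⌋₊ = i := by
    rw [Nat.floor_eq_iff (add_nonneg (by positivity) hx.1)]
    exact ⟨by linarith [hx.1], by linarith [hx.2]⟩
  rw [e, e2, add_sub_cancel_left]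

lemma bint0 {g : ℝ → ℝ} (hg : Measurable g) {B : ℝ} (h0 : ∀ x, 0 ≤ g x) (hB : ∀ x, g x ≤ B) :
    IntegrableOn g (Ico (0:ℝ) 1) :=
  bint hg (B := B) fun x _ => by rw [abs_of_nonneg (h0 x)]; exact hB x

lemma bintp {g : ℝ → ℝ} (hg : Measurable g) {B p : ℝ} (hp : 1 < p) (h0 : ∀ x, 0 ≤ g x)
    (hB : ∀ x, g x ≤ B) : IntegrableOn (fun x => g x ^ p) (Ico (0:ℝ) 1) :=
  bint0 (hg.pow_const p) (B := B ^ p) (fun x => Real.rpow_nonneg (h0 x) p)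
    fun x => Real.rpow_le_rpow (h0 x) (hB x) (by linarith)

lemma cat_all {N : ℕ} (hN : 2 ≤ N) {p : ℝ} (hp : 1 < p) {ψ : ℕ → ℝ → ℝ} {B : ℝ}
    (hm : ∀ i, Measurable (ψ i)) (h0 : ∀ i x, 0 ≤ ψ i x) (hB : ∀ i x, ψ i x ≤ B) {A : ℝ}
    (hA : (1/(N:ℝ)) * ∑ i ∈ Finset.range N, ∫ x in Ico (0:ℝ) 1, ψ i x = A) :
    ∫ x in Ico (0:ℝ) 1, cat N ψ x = A ∧
    ∫ x in Ico (0:ℝ) 1, cat N ψ x ^ p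
      = (1/(N:ℝ)) * ∑ i ∈ Finset.range N, ∫ x in Ico (0:ℝ) 1, ψ i x ^ p ∧
    ∫ x in Ico (0:ℝ) 1, GG N (cat N ψ) x ^ p
      = (1/(N:ℝ)) * ∑ i ∈ Finset.range N, ∫ x in Ico (0:ℝ) 1, (max A (GG N (ψ i) x)) ^ p := by
  have c0 : ∀ x, 0 ≤ cat N ψ x := fun x => h0 _ _
  have cB : ∀ x, cat N ψ x ≤ B := fun x => hB _ _
  have cm := cat_meas (N := N) hm
  have e1 : ∫ x in Ico (0:ℝ) 1, cat N ψ x = A := by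
    rw [int_split hN (bint0 cm c0 cB), ← hA]
    congr 1
    refine Finset.sum_congr rfl fun i _ => ?_
    exact setIntegral_congr_fun measurableSet_Ico fun x hx => sb_cat hN ψ i hx
  refine ⟨e1, ?_, ?_⟩
  · rw [int_split hN (bintp cm hp c0 cB)]
    congr 1
    refine Finset.sum_congr rfl fun i _ => ?_
    refine setIntegral_congr_fun measurableSet_Ico fun x hx => ?_
    change (sb N (cat N ψ) i x) ^ p = _
    rw [sb_cat hN ψ i hx]
  · rw [int_split hN (bintp (GG_meas N _) hp (GG_nonneg N _) (GG_le_B hN c0 cB))]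
    congr 1
    refine Finset.sum_congr rfl fun i hi => ?_
    refine setIntegral_congr_fun measurableSet_Ico fun x hx => ?_
    change (GG N (cat N ψ) (((i:ℝ) + x) / N)) ^ p = _
    rw [GG_step hN c0 cB (Finset.mem_range.1 hi) hx, e1,
      GG_congr hN (fun y hy => sb_cat hN ψ i hy) hx]

end
noncomputable section

def RR (N : ℕ) (p C F ε : ℝ) : Prop :=
  ∃ (φ : ℝ → ℝ) (B : ℝ), Measurable φ ∧ (∀ x, 0 ≤ φ x) ∧ (∀ x, φ x ≤ B) ∧
    ∫ x in Ico (0:ℝ) 1, φ x = 1 ∧ ∫ x in Ico (0:ℝ) 1, φ x ^ p = F ∧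
    ∫ x in Ico (0:ℝ) 1, GG N φ x ^ p ≤ 1 + C * (F - 1) + ε

lemma RR_mono {N : ℕ} {p C F ε ε' : ℝ} (h : ε ≤ ε') : RR N p C F ε → RR N p C F ε' := by
  rintro ⟨φ, B, h1, h2, h3, h4, h5, h6⟩
  exact ⟨φ, B, h1, h2, h3, h4, h5, by linarith⟩

lemma RR_one {N : ℕ} (hN : 2 ≤ N) (p C : ℝ) : RR N p C 1 0 := by
  refine ⟨fun _ => 1, 1, measurable_const, fun _ => zero_le_one, fun _ => le_rfl, by simp, by simp, ?_⟩
  have : ∫ x in Ico (0:ℝ) 1, GG N (fun _ => 1) x ^ p = ∫ x in Ico (0:ℝ) 1, (1:ℝ) :=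
    setIntegral_congr_fun measurableSet_Ico fun x hx => by
      simp only [GG_const hN zero_le_one hx, Real.one_rpow]
  rw [this]; simp

lemma RR_jump {N : ℕ} (hN : 2 ≤ N) {p C F ε : ℝ} (hp : 1 < p)
    (hC : C * ((N:ℝ)^p - N) = (N:ℝ)^p - 1) (h : RR N p C F ε) :
    RR N p C ((N:ℝ)^p / N * F) ((N:ℝ)^p / N * ε) := by
  obtain ⟨ψ, B, h1, h2, h3, h4, h5, h6⟩ := h
  have hN0 : (0:ℝ) < N := by positivity
  have hB0 : 0 ≤ B := (h2 0).trans (h3 0)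
  set Ψ : ℕ → ℝ → ℝ := fun i => if i = 0 then (fun x => N * ψ x) else fun _ => 0 with hΨ
  have m1 : ∀ i, Measurable (Ψ i) := by
    intro i; simp only [hΨ]; split_ifs
    · exact h1.const_mul _
    · exact measurable_const
  have m2 : ∀ i x, 0 ≤ Ψ i x := by
    intro i x; simp only [hΨ]; split_ifs
    · exact mul_nonneg hN0.le (h2 x)
    · exact le_rfl
  have m3 : ∀ i x, Ψ i x ≤ N * B := by
    intro i x; simp only [hΨ]; split_ifs
    · exact mul_le_mul_of_nonneg_left (h3 x) hN0.le
    · positivity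
  obtain ⟨n, rfl⟩ : ∃ n, N = n + 1 := ⟨N - 1, by omega⟩
  obtain ⟨a1, a2, a3⟩ := cat_all hN hp m1 m2 m3 (A := 1) (by
    rw [Finset.sum_range_succ']
    simp only [hΨ, if_true, Nat.succ_ne_zero, if_false, integral_const_mul, h4]
    simp
    field_simp)
  have b2 : ∫ x in Ico (0:ℝ) 1, cat (n+1) Ψ x ^ p = ((n+1:ℕ):ℝ)^p / (n+1:ℕ) * F := by
    rw [a2, Finset.sum_range_succ']
    simp only [hΨ, if_true, Nat.succ_ne_zero, if_false,
      Real.mul_rpow hN0.le (h2 _), integral_const_mul, h5, Real.zero_rpow (by linarith : p ≠ 0)]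
    simp
    ring
  refine ⟨cat (n+1) Ψ, (n+1:ℕ) * B, cat_meas m1, fun x => m2 _ _, fun x => m3 _ _, a1, b2, ?_⟩
  rw [a3, Finset.sum_range_succ']
  have c1 : ∫ x in Ico (0:ℝ) 1, (max 1 (GG (n+1) (Ψ 0) x)) ^ p
      = ((n+1:ℕ):ℝ)^p * ∫ x in Ico (0:ℝ) 1, GG (n+1) ψ x ^ p := by
    rw [← integral_const_mul]
    refine setIntegral_congr_fun measurableSet_Ico fun x hx => ?_
    simp only [hΨ, if_true]
    rw [GG_mul _ _ hN0.le, ← Real.mul_rpow hN0.le (GG_nonneg _ _ _), max_eq_right]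
    have g1 := int_le_GG hN h2 h3 hx
    rw [h4] at g1
    have g2 : (1:ℝ) ≤ (n+1:ℕ) := by exact_mod_cast (by omega : 1 ≤ n+1)
    nlinarith
  have c2 : ∀ i, ∫ x in Ico (0:ℝ) 1, (max 1 (GG (n+1) (Ψ (i+1)) x)) ^ p = 1 := by
    intro i
    have : ∫ x in Ico (0:ℝ) 1, (max 1 (GG (n+1) (Ψ (i+1)) x)) ^ p = ∫ x in Ico (0:ℝ) 1, (1:ℝ) := by
      refine setIntegral_congr_fun measurableSet_Ico fun x hx => ?_
      simp only [hΨ, Nat.succ_ne_zero, if_false]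
      rw [GG_const hN le_rfl hx, max_eq_left zero_le_one, Real.one_rpow]
    rw [this]; simp
  rw [c1]
  simp only [c2]
  simp only [Finset.sum_const, Finset.card_range, nsmul_eq_mul, mul_one]
  set J := ∫ x in Ico (0:ℝ) 1, GG (n+1) ψ x ^ p
  have hn : ((n+1:ℕ):ℝ) = n + 1 := by push_cast; ring
  have hNp : 0 ≤ ((n+1:ℕ):ℝ)^p := by positivity
  have hJ := mul_le_mul_of_nonneg_left h6 hNp
  have e : (1:ℝ) / (n+1:ℕ) * (n + ((n+1:ℕ):ℝ)^p * J) = (n + ((n+1:ℕ):ℝ)^p * J) / (n+1:ℕ) := by ring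
  rw [e, div_le_iff₀ hN0]
  have e2 : (1 + C * (((n+1:ℕ):ℝ)^p / (n+1:ℕ) * F - 1) + ((n+1:ℕ):ℝ)^p / (n+1:ℕ) * ε) * (n+1:ℕ)
     = (n+1:ℕ) - C * (n+1:ℕ) + ((n+1:ℕ):ℝ)^p * (C * F + ε) := by
    field_simp
    ring
  rw [e2]
  have : (n:ℝ) = ((n+1:ℕ):ℝ) - 1 := by rw [hn]; ring
  nlinarith

lemma RR_cat {N : ℕ} (hN : 2 ≤ N) {p C : ℝ} {F ε : ℕ → ℝ} (hp : 1 < p)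
    (h : ∀ i, RR N p C (F i) (ε i)) :
    RR N p C ((1/(N:ℝ)) * ∑ i ∈ Finset.range N, F i) ((1/(N:ℝ)) * ∑ i ∈ Finset.range N, ε i) := by
  have hN0 : (0:ℝ) < N := by positivity
  choose ψ B h1 h2 h3 h4 h5 h6 using h
  have hB0 : ∀ i, 0 ≤ B i := fun i => (h2 i 0).trans (h3 i 0)
  set Ψ : ℕ → ℝ → ℝ := fun i => if i < N then ψ i else fun _ => 0 with hΨ
  have hΨi : ∀ i ∈ Finset.range N, Ψ i = ψ i := fun i hi => by
    simp only [hΨ, if_pos (Finset.mem_range.1 hi)]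
  have m1 : ∀ i, Measurable (Ψ i) := by
    intro i; simp only [hΨ]; split_ifs
    · exact h1 i
    · exact measurable_const
  have m2 : ∀ i x, 0 ≤ Ψ i x := by
    intro i x; simp only [hΨ]; split_ifs
    · exact h2 i x
    · exact le_rfl
  have m3 : ∀ i x, Ψ i x ≤ ∑ i ∈ Finset.range N, B i := by
    intro i x; simp only [hΨ]; split_ifs with hi
    · exact (h3 i x).trans
        (Finset.single_le_sum (f := B) (fun j _ => hB0 j) (Finset.mem_range.2 hi))
    · exact Finset.sum_nonneg fun j _ => hB0 j
  obtain ⟨a1, a2, a3⟩ := cat_all hN hp m1 m2 m3 (A := 1) (by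
    rw [Finset.sum_congr rfl fun i hi => by rw [hΨi i hi, h4 i]]
    simp
    field_simp)
  refine ⟨cat N Ψ, _, cat_meas m1, fun x => m2 _ _, fun x => m3 _ _, a1, ?_, ?_⟩
  · rw [a2]
    congr 1
    exact Finset.sum_congr rfl fun i hi => by rw [hΨi i hi, h5 i]
  · rw [a3]
    have hle : ∑ i ∈ Finset.range N, ∫ x in Ico (0:ℝ) 1, (max 1 (GG N (Ψ i) x)) ^ p
        ≤ ∑ i ∈ Finset.range N, (1 + C * (F i - 1) + ε i) := by
      refine Finset.sum_le_sum fun i hi => ?_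
      rw [hΨi i hi]
      refine le_trans (le_of_eq ?_) (h6 i)
      refine setIntegral_congr_fun measurableSet_Ico fun x hx => ?_
      have g1 := int_le_GG hN (h2 i) (h3 i) hx
      rw [h4 i] at g1
      simp only [max_eq_right g1]
    refine (mul_le_mul_of_nonneg_left hle (by positivity)).trans (le_of_eq ?_)
    simp only [Finset.sum_add_distrib, ← Finset.mul_sum, Finset.sum_sub_distrib]
    simp
    field_simp

lemma RR_base {N : ℕ} (hN : 2 ≤ N) {p C F : ℝ} (hp : 1 < p) (hC : 0 ≤ C)
    (hF1 : 1 ≤ F) (hF2 : F ≤ (N:ℝ)^p / N) : RR N p C F ((N:ℝ)^p) := by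
  obtain ⟨n, rfl⟩ : ∃ n, N = n + 1 := ⟨N - 1, by omega⟩
  have hn1 : (1:ℝ) ≤ n := by exact_mod_cast (by omega : 1 ≤ n)
  have hn : ((n+1:ℕ):ℝ) = n + 1 := by push_cast; ring
  rw [hn] at hF2 ⊢
  have hcont : ContinuousOn (fun a : ℝ => (a ^ p + n * ((n + 1 - a)/n) ^ p) / (n+1))
      (Icc 1 ((n:ℝ)+1)) := by
    apply Continuous.continuousOn
    have hc1 : Continuous fun a : ℝ => a ^ p := Real.continuous_rpow_const (by linarith)
    have hc2 : Continuous fun a : ℝ => ((n + 1 - a)/n : ℝ) := by fun_prop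
    exact ((hc1.add (continuous_const.mul (hc1.comp hc2)))).div_const _
  obtain ⟨a, ⟨ha1, ha2⟩, ha⟩ := intermediate_value_Icc (by linarith : (1:ℝ) ≤ n + 1) hcont
    (show F ∈ _ from ⟨by
      refine le_trans (le_of_eq ?_) hF1
      simp only [Real.one_rpow, add_sub_cancel_right]
      rw [div_self (by linarith), Real.one_rpow]
      field_simp
      ring, by
      simp only [sub_self, zero_div]
      rw [Real.zero_rpow (by linarith)]
      simpa using hF2⟩)
  simp only at ha
  set b : ℝ := (n + 1 - a)/n with hb
  have hb0 : 0 ≤ b := div_nonneg (by linarith) (by linarith)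
  have hb1 : b ≤ n + 1 := by rw [hb, div_le_iff₀ (by linarith)]; nlinarith
  set Ψ : ℕ → ℝ → ℝ := fun i => if i = 0 then (fun x => a) else fun _ => b with hΨ
  have m1 : ∀ i, Measurable (Ψ i) := by
    intro i; simp only [hΨ]; split_ifs <;> exact measurable_const
  have m2 : ∀ i x, 0 ≤ Ψ i x := by
    intro i x; simp only [hΨ]; split_ifs <;> linarith
  have m3 : ∀ i x, Ψ i x ≤ n + 1 := by
    intro i x; simp only [hΨ]; split_ifs <;> linarith
  obtain ⟨a1, a2, a3⟩ := cat_all hN hp m1 m2 m3 (A := 1) (by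
    rw [Finset.sum_range_succ']
    simp only [hΨ, if_true, Nat.succ_ne_zero, if_false]
    simp [hb]
    field_simp
    ring)
  refine ⟨cat (n+1) Ψ, _, cat_meas m1, fun x => m2 _ _, fun x => m3 _ _, a1, ?_, ?_⟩
  · rw [a2, Finset.sum_range_succ', ← ha]
    simp only [hΨ, if_true, Nat.succ_ne_zero, if_false]
    simp
    ring
  · have : ∫ x in Ico (0:ℝ) 1, GG (n+1) (cat (n+1) Ψ) x ^ p
        ≤ ∫ x in Ico (0:ℝ) 1, ((n:ℝ)+1) ^ p := by
      have g := GG_le_B hN (φ := cat (n+1) Ψ) (fun x => m2 _ _) (fun x => m3 _ _)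
      refine integral_mono (bintp (GG_meas _ _) hp (GG_nonneg _ _) g)
        (integrableOn_const (by simp)) fun x => ?_
      exact Real.rpow_le_rpow (GG_nonneg _ _ _) (g x) (by linarith)
    simp at this
    have : 0 ≤ C * (F - 1) := mul_nonneg hC (by linarith)
    linarith

lemma sum_step (j : ℕ) (r : ℝ) (k : ℕ) :
    ∑ i ∈ Finset.range (j + 1 + k), (if i < j then (1:ℝ) else if i = j then r else 0) = j + r := by
  induction k with
  | zero =>
    rw [add_zero, Finset.sum_range_succ,
      Finset.sum_congr rfl fun i hi => if_pos (Finset.mem_range.1 hi)]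
    simp
  | succ k ih =>
    rw [← add_assoc, Finset.sum_range_succ, ih, if_neg (by omega), if_neg (by omega), add_zero]

lemma RR_iter {N : ℕ} (hN : 2 ≤ N) {p C : ℝ} (hp : 1 < p)
    (hC : C * ((N:ℝ)^p - N) = (N:ℝ)^p - 1) (hK : 1 < (N:ℝ)^p / N) {ε : ℝ}
    (h : ∀ F, 1 ≤ F → F ≤ (N:ℝ)^p / N → RR N p C F ε) (hε : 0 ≤ ε) :
    ∀ F, 1 ≤ F → F ≤ (N:ℝ)^p / N → RR N p C F (ε / N) := by
  intro F hF1 hF2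
  have hN0 : (0:ℝ) < N := by positivity
  have hK0 : RR N p C ((N:ℝ)^p / N) 0 := by
    have := RR_jump hN hp hC (RR_one hN p C)
    simpa using this
  rcases hF2.eq_or_lt with h1 | h1
  · rw [h1]; exact RR_mono (by positivity) hK0
  set K := (N:ℝ)^p / N with hKd
  have hK1 : 0 < K - 1 := by linarith
  obtain ⟨u, hu⟩ : ∃ u, u = N * ((F - 1) / (K - 1)) := ⟨_, rfl⟩
  have hu0 : 0 ≤ u := by rw [hu]; exact mul_nonneg hN0.le (div_nonneg (by linarith) hK1.le)
  have hu1 : u < N := by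
    rw [hu]
    have : (F-1)/(K-1) < 1 := by rw [div_lt_one hK1]; linarith
    nlinarith
  have hFu : F = 1 + (K - 1) * (u / N) := by rw [hu]; field_simp; ring
  set j := ⌊u⌋₊ with hj
  have hjN : j < N := (Nat.floor_lt hu0).2 hu1
  obtain ⟨r, hr⟩ : ∃ r, r = u - j := ⟨_, rfl⟩
  have hr0 : 0 ≤ r := by rw [hr]; linarith [Nat.floor_le hu0]
  have hr1 : r ≤ 1 := by rw [hr]; linarith [Nat.lt_floor_add_one u]
  obtain ⟨k, hk⟩ : ∃ k, N = j + 1 + k := ⟨N - (j+1), by omega⟩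
  have := RR_cat hN (C := C) (p := p)
    (F := fun i => 1 + (K-1) * (if i < j then (1:ℝ) else if i = j then r else 0))
    (ε := fun i => if i = j then ε else 0) hp (fun i => by
      by_cases c1 : i < j
      · simp only [if_pos c1, if_neg c1.ne]
        convert hK0 using 1; ring
      · by_cases c2 : i = j
        · simp only [if_neg c1, if_pos c2]
          exact h _ (by nlinarith) (by nlinarith)
        · simp only [if_neg c1, if_neg c2]
          simpa using RR_one hN p C)
  have e1 : ∑ i ∈ Finset.range N, (if i < j then (1:ℝ) else if i = j then r else 0) = j + r := by
    have := sum_step j r k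
    rwa [← hk] at this
  convert this using 1
  · rw [Finset.sum_add_distrib, ← Finset.mul_sum, e1, hFu, hr]
    simp
    field_simp
  · rw [Finset.sum_ite_eq' , if_pos (Finset.mem_range.2 hjN)]
    ring

lemma RR_small {N : ℕ} (hN : 2 ≤ N) {p C : ℝ} (hp : 1 < p) (hC1 : 1 ≤ C)
    (hC : C * ((N:ℝ)^p - N) = (N:ℝ)^p - 1) (hK : 1 < (N:ℝ)^p / N) {F ε : ℝ}
    (hε : 0 < ε) (hF1 : 1 ≤ F) (hF2 : F ≤ (N:ℝ)^p / N) : RR N p C F ε := by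
  have hN0 : (0:ℝ) < N := by positivity
  have h : ∀ n : ℕ, ∀ F, 1 ≤ F → F ≤ (N:ℝ)^p / N → RR N p C F ((N:ℝ)^p / N ^ n) := by
    intro n
    induction n with
    | zero => intro F h1 h2; simpa using RR_base hN hp (by linarith) h1 h2
    | succ n ih =>
      intro F h1 h2
      have := RR_iter hN hp hC hK ih (by positivity) F h1 h2
      rwa [div_div, ← pow_succ] at this
  obtain ⟨n, hn⟩ := pow_unbounded_of_one_lt ((N:ℝ)^p / ε)
    (by exact_mod_cast (by omega : 1 < N) : (1:ℝ) < N)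
  refine RR_mono ?_ (h n F hF1 hF2)
  rw [div_lt_iff₀ hε] at hn
  rw [div_le_iff₀ (by positivity)]
  linarith

lemma RR_all {N : ℕ} (hN : 2 ≤ N) {p C : ℝ} (hp : 1 < p) (hC1 : 1 ≤ C)
    (hC : C * ((N:ℝ)^p - N) = (N:ℝ)^p - 1) (hK : 1 < (N:ℝ)^p / N) {F ε : ℝ}
    (hε : 0 < ε) (hF1 : 1 ≤ F) : RR N p C F ε := by
  have hK0 : 0 < (N:ℝ)^p / N := by linarith
  have h : ∀ m : ℕ, ∀ F ε : ℝ, 0 < ε → 1 ≤ F → F ≤ ((N:ℝ)^p / N) ^ (m+1) → RR N p C F ε := by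
    intro m
    induction m with
    | zero => intro F ε hε h1 h2; exact RR_small hN hp hC1 hC hK hε h1 (by simpa using h2)
    | succ m ih =>
      intro F ε hε h1 h2
      rcases le_total F ((N:ℝ)^p / N) with h3 | h3
      · exact RR_small hN hp hC1 hC hK hε h1 h3
      · have := RR_jump hN hp hC (ih (F / ((N:ℝ)^p / N)) (ε / ((N:ℝ)^p / N)) (by positivity)
          (by rwa [one_le_div hK0]) (by rw [div_le_iff₀ hK0, ← pow_succ]; exact h2))
        rwa [mul_div_cancel₀ _ hK0.ne', mul_div_cancel₀ _ hK0.ne'] at this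
  obtain ⟨n, hn⟩ := pow_unbounded_of_one_lt F hK
  refine h n F ε hε hF1 (hn.le.trans ?_)
  exact pow_le_pow_right₀ hK.le (by omega)

end
noncomputable section

lemma upper_bound {N : ℕ} (hN : 2 ≤ N) {p C f F κ ε : ℝ} (hp : 1 < p)
    (hC : C * ((N:ℝ)^p - N) = (N:ℝ)^p - 1) (hC1 : 1 ≤ C) (hK : 1 < (N:ℝ)^p / N)
    (hf : 0 < f) (hfF : f ^ p ≤ F) (hκ0 : 0 < κ) (hκ1 : κ ≤ 1) (hε : 0 < ε) :
    ∃ φ : ℝ → ℝ, Measurable φ ∧ (∀ x ∈ Ico (0:ℝ) 1, 0 ≤ φ x) ∧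
      (∫ x in Ico (0:ℝ) 1, φ x) = f ∧ (∫ x in Ico (0:ℝ) 1, φ x ^ p) = F ∧
      supMeas N p κ φ ≤ κ * f ^ p + C * (F - f ^ p) + ε := by
  have hfp : 0 < f ^ p := Real.rpow_pos_of_pos hf p
  obtain ⟨ψ, B, h1, h2, h3, h4, h5, h6⟩ := RR_all hN hp hC1 hC hK (F := F / f ^ p)
    (ε := ε / f ^ p) (by positivity) (by rwa [one_le_div hfp])
  refine ⟨fun x => f * ψ x, h1.const_mul f, fun x _ => mul_nonneg hf.le (h2 x), ?_, ?_, ?_⟩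
  · rw [integral_const_mul, h4, mul_one]
  · simp only [Real.mul_rpow hf.le (h2 _)]
    rw [integral_const_mul, h5]
    field_simp
  · unfold supMeas
    apply csSup_le
    · exact ⟨_, Ico 0 κ, measurableSet_Ico, Ico_subset_Ico_right hκ1, by simp, rfl⟩
    rintro z ⟨E, hE, hE1, hvE, rfl⟩
    have hEfin : volume E ≠ ⊤ := by rw [hvE]; simp
    have hGi : IntegrableOn (fun x => GG N ψ x ^ p) (Ico (0:ℝ) 1) :=
      bintp (GG_meas N ψ) hp (GG_nonneg N ψ) (GG_le_B hN h2 h3)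
    have e1 : ∫ x in E, adicMax N (fun x => f * ψ x) x ^ p = f ^ p * ∫ x in E, GG N ψ x ^ p := by
      rw [← integral_const_mul]
      refine setIntegral_congr_fun hE fun x hx => ?_
      rw [adicMax_eq hN _ (hE1 hx)]
      change (GG N (fun x => f * ψ x) x) ^ p = _
      rw [GG_mul N ψ hf.le, Real.mul_rpow hf.le (GG_nonneg _ _ _)]
    have e2 : ∫ x in E, (GG N ψ x ^ p - 1) = (∫ x in E, GG N ψ x ^ p) - κ := by
      rw [integral_sub (hGi.mono_set hE1) (integrableOn_const hEfin)]
      simp [Measure.real, hvE, ENNReal.toReal_ofReal hκ0.le]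
    have e3 : ∫ x in Ico (0:ℝ) 1, (GG N ψ x ^ p - 1) = (∫ x in Ico (0:ℝ) 1, GG N ψ x ^ p) - 1 := by
      rw [integral_sub hGi (integrableOn_const (by simp))]
      simp
    have e4 : ∫ x in E, (GG N ψ x ^ p - 1) ≤ ∫ x in Ico (0:ℝ) 1, (GG N ψ x ^ p - 1) := by
      refine setIntegral_mono_set (hGi.sub (integrableOn_const (by simp))) ?_ hE1.eventuallyLE
      filter_upwards [ae_restrict_mem measurableSet_Ico] with x hx
      have g1 := int_le_GG hN h2 h3 hx
      rw [h4] at g1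
      have := Real.one_le_rpow g1 (by linarith : 0 ≤ p)
      simp only [Pi.zero_apply]
      linarith
    have e5 : ∫ x in E, GG N ψ x ^ p ≤ κ + C * (F / f ^ p - 1) + ε / f ^ p := by linarith
    rw [e1]
    refine (mul_le_mul_of_nonneg_left e5 hfp.le).trans (le_of_eq ?_)
    field_simp

end

theorem stmt2 (N : ℕ) (hN : 2 ≤ N) (p f F κ c : ℝ) (hp : 1 < p)
    (hf : 0 < f) (hF : 0 < F) (hfF : f ^ p ≤ F)
    (hc : c = ((p - 1) / p) * (((N : ℝ) ^ p - 1) / ((N : ℝ) ^ p - N)))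
    (hκ1 : c ≤ κ) (hκ2 : κ ≤ 1) :
    Dp N p F f κ =
      κ * f ^ p + (((N : ℝ) ^ p - 1) / ((N : ℝ) ^ p - N)) * (F - f ^ p) := by

  have hN1 : (1:ℝ) < N := by exact_mod_cast (by omega : 1 < N)
  have hN0 : (0:ℝ) < N := by linarith
  have hNp : (N:ℝ) < (N:ℝ) ^ p := by
    simpa using Real.rpow_lt_rpow_of_exponent_lt hN1 hp
  obtain ⟨C, hCd⟩ : ∃ C, C = ((N : ℝ) ^ p - 1) / ((N : ℝ) ^ p - N) := ⟨_, rfl⟩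
  have hd : 0 < (N:ℝ)^p - N := by linarith
  have hC : C * ((N:ℝ)^p - N) = (N:ℝ)^p - 1 := by rw [hCd]; field_simp
  have hC1 : 1 ≤ C := by rw [hCd, one_le_div hd]; linarith
  have hK : 1 < (N:ℝ)^p / N := by rwa [one_lt_div hN0]
  rw [← hCd] at hc ⊢
  have hκ : (p-1)/p * C ≤ κ := hc ▸ hκ1
  have hκ0 : 0 < κ :=
    lt_of_lt_of_le (mul_pos (div_pos (by linarith) (by linarith)) (by linarith)) hκ
  have hlow : ∀ y ∈ {y : ℝ | ∃ φ : ℝ → ℝ, Measurable φ ∧ (∀ x ∈ Set.Ico (0:ℝ) 1, 0 ≤ φ x) ∧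
    (∫ x in Set.Ico (0:ℝ) 1, φ x) = f ∧ (∫ x in Set.Ico (0:ℝ) 1, φ x ^ p) = F ∧
    y = supMeas N p κ φ}, κ * f ^ p + C * (F - f ^ p) ≤ y := by
    rintro y ⟨φ, -, h0, h1, h2, rfl⟩
    exact lower_bound hN hp hC hC1 hf hF hκ hκ2 h0 h1 h2
  unfold Dp
  apply le_antisymm
  · refine le_of_forall_pos_le_add fun ε hε => ?_
    obtain ⟨φ, a1, a2, a3, a4, a5⟩ := upper_bound hN hp hC hC1 hK hf hfF hκ0 hκ2 hε
    exact (csInf_le ⟨_, hlow⟩ ⟨φ, a1, a2, a3, a4, rfl⟩).trans a5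
  · obtain ⟨φ, a1, a2, a3, a4, a5⟩ := upper_bound hN hp hC hC1 hK hf hfF hκ0 hκ2 one_pos
    exact le_csInf ⟨_, φ, a1, a2, a3, a4, rfl⟩ hlow
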